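/- Let A be a dg algebra over F₂ that is homologically smooth, and let M be a bounded dg (A,A)-bimodule. Then both spectral sequences ^{hv}E^r_{p,q} and ^{vh}E^r_{p,q} attached to the Hochschild–Tate bicomplex HC^Tate(A, M ⊗̃_A M) converge to the homology of the total complex of HC^Tate. -/

import Mathlib

noncomputable section
open TensorProduct

namespace LT

/-- A differential graded (dg) algebra over a commutative ring `k`: a chain complex with a
degree `-1` differential together with an associative unital multiplication satisfying the
(signed) Leibniz rule; over `𝔽₂` the signs are invisible. The grading is given by an internal
direct sum decomposition into submodules. -/
structure DGA (k : Type) [CommRing k] : Type 1 where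
  V : Type
  [acg : AddCommGroup V]
  [mod : Module k V]
  gr : ℤ → Submodule k V
  internal : DirectSum.IsInternal gr
  d : V →ₗ[k] V
  d_d : ∀ x, d (d x) = 0
  d_gr : ∀ i, ∀ x ∈ gr i, d x ∈ gr (i - 1)
  mul : V →ₗ[k] V →ₗ[k] V
  mul_assoc' : ∀ x y z, mul (mul x y) z = mul x (mul y z)
  one : V
  one_gr : one ∈ gr 0
  one_mul' : ∀ x, mul one x = x
  mul_one' : ∀ x, mul x one = x
  mul_gr : ∀ i j, ∀ x ∈ gr i, ∀ y ∈ gr j, mul x y ∈ gr (i + j)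
  leibniz : ∀ i, ∀ x ∈ gr i, ∀ y, d (mul x y) = mul (d x) y + (Int.negOnePow i : ℤ) • mul x (d y)

attribute [instance] DGA.acg
attribute [instance 2000] DGA.mod

variable {k : Type} [CommRing k]

/-- A dg `(A,A)`-bimodule over a dg algebra `A`. -/
structure DGBimod (A : DGA k) : Type 1 where
  V : Type
  [acg : AddCommGroup V]
  [mod : Module k V]
  gr : ℤ → Submodule k V
  internal : DirectSum.IsInternal gr
  d : V →ₗ[k] V
  d_d : ∀ x, d (d x) = 0
  d_gr : ∀ i, ∀ x ∈ gr i, d x ∈ gr (i - 1)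
  actL : A.V →ₗ[k] V →ₗ[k] V
  actR : V →ₗ[k] A.V →ₗ[k] V
  actL_one : ∀ m, actL A.one m = m
  actR_one : ∀ m, actR m A.one = m
  actL_mul : ∀ a b m, actL (A.mul a b) m = actL a (actL b m)
  actR_mul : ∀ m a b, actR (actR m a) b = actR m (A.mul a b)
  actLR : ∀ a m b, actR (actL a m) b = actL a (actR m b)
  actL_gr : ∀ i j, ∀ a ∈ A.gr i, ∀ m ∈ gr j, actL a m ∈ gr (i + j)
  actR_gr : ∀ i j, ∀ m ∈ gr i, ∀ a ∈ A.gr j, actR m a ∈ gr (i + j)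
  leibnizL : ∀ i, ∀ a ∈ A.gr i, ∀ m, d (actL a m) = actL (A.d a) m + (Int.negOnePow i : ℤ) • actL a (d m)
  leibnizR : ∀ j, ∀ m ∈ gr j, ∀ a, d (actR m a) = actR (d m) a + (Int.negOnePow j : ℤ) • actR m (A.d a)

attribute [instance] DGBimod.acg
attribute [instance 2000] DGBimod.mod

/-- The diagonal bimodule: `A` viewed as a bimodule over itself. -/
def DGA.diag (A : DGA k) : DGBimod A where
  V := A.V
  gr := A.gr
  internal := A.internal
  d := A.d
  d_d := A.d_d
  d_gr := A.d_gr
  actL := A.mul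
  actR := A.mul
  actL_one := A.one_mul'
  actR_one := A.mul_one'
  actL_mul := fun a b m => A.mul_assoc' a b m
  actR_mul := fun m a b => A.mul_assoc' m a b
  actLR := fun a m b => A.mul_assoc' a m b
  actL_gr := A.mul_gr
  actR_gr := A.mul_gr
  leibnizL := A.leibniz
  leibnizR := A.leibniz

variable {A : DGA k}

/-- A homomorphism of dg bimodules of degree `s`: a linear map raising degree by `s`,
commuting with the differentials and the two actions. -/
def IsBHom (M N : DGBimod A) (s : ℤ) (f : M.V →ₗ[k] N.V) : Prop :=
  (∀ i, ∀ x ∈ M.gr i, f x ∈ N.gr (i + s)) ∧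
  (∀ x, f (M.d x) = N.d (f x)) ∧
  (∀ a m, f (M.actL a m) = N.actL a (f m)) ∧
  (∀ m a, f (M.actR m a) = N.actR (f m) a)

/-- Graded maps of degree `s` compatible with the bimodule actions (no compatibility with the
differential required); these are used as homotopies. -/
def grHomSub (M N : DGBimod A) (s : ℤ) : Submodule k (M.V →ₗ[k] N.V) where
  carrier := {f | (∀ i, ∀ x ∈ M.gr i, f x ∈ N.gr (i + s)) ∧
    (∀ a m, f (M.actL a m) = N.actL a (f m)) ∧
    (∀ m a, f (M.actR m a) = N.actR (f m) a)}
  add_mem' := by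
    rintro f g ⟨hf1, hf2, hf3⟩ ⟨hg1, hg2, hg3⟩
    refine ⟨fun i x hx => ?_, fun a m => ?_, fun m a => ?_⟩ <;>
      simp [LinearMap.add_apply, hf2, hg2, hf3, hg3]
    exact Submodule.add_mem _ (hf1 i x hx) (hg1 i x hx)
  zero_mem' := by
    refine ⟨fun i x hx => ?_, fun a m => ?_, fun m a => ?_⟩ <;> simp
  smul_mem' := by
    rintro c f ⟨hf1, hf2, hf3⟩
    refine ⟨fun i x hx => ?_, fun a m => ?_, fun m a => ?_⟩ <;>
      simp [LinearMap.smul_apply, hf2, hf3]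
    exact Submodule.smul_mem _ _ (hf1 i x hx)

/-- Bimodule chain maps of degree `s`, as a submodule of all linear maps. -/
def bcmSub (M N : DGBimod A) (s : ℤ) : Submodule k (M.V →ₗ[k] N.V) where
  carrier := {f | IsBHom M N s f}
  add_mem' := by
    rintro f g ⟨hf1, hf0, hf2, hf3⟩ ⟨hg1, hg0, hg2, hg3⟩
    refine ⟨fun i x hx => ?_, fun x => ?_, fun a m => ?_, fun m a => ?_⟩ <;>
      simp [LinearMap.add_apply, hf0, hg0, hf2, hg2, hf3, hg3]
    exact Submodule.add_mem _ (hf1 i x hx) (hg1 i x hx)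
  zero_mem' := by
    refine ⟨fun i x hx => ?_, fun x => ?_, fun a m => ?_, fun m a => ?_⟩ <;> simp
  smul_mem' := by
    rintro c f ⟨hf1, hf0, hf2, hf3⟩
    refine ⟨fun i x hx => ?_, fun x => ?_, fun a m => ?_, fun m a => ?_⟩ <;>
      simp [LinearMap.smul_apply, hf0, hf2, hf3]
    exact Submodule.smul_mem _ _ (hf1 i x hx)

/-- The nullhomotopic degree-`s` maps `d ∘ h + h ∘ d` for `h` a degree `s+1` bimodule map. -/
def nullHtpSub (M N : DGBimod A) (s : ℤ) : Submodule k (M.V →ₗ[k] N.V) :=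
  Submodule.map
    ((LinearMap.llcomp k M.V N.V N.V N.d) + (LinearMap.lcomp k N.V M.d))
    (grHomSub M N (s + 1))

/-- Homotopy classes of degree-`s` bimodule chain maps `M → N`; for `M` a cell retract this
computes morphisms `Σ^s M → N` in the derived category of dg bimodules. -/
def HtpyHom (M N : DGBimod A) (s : ℤ) :=
  bcmSub M N s ⧸ Submodule.comap (bcmSub M N s).subtype (nullHtpSub M N s)

instance (M N : DGBimod A) (s : ℤ) : AddCommGroup (HtpyHom M N s) :=
  inferInstanceAs (AddCommGroup (_ ⧸ _))
instance (M N : DGBimod A) (s : ℤ) : Module k (HtpyHom M N s) :=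
  inferInstanceAs (Module k (_ ⧸ _))


/-- Homology in degree `n` of a graded module with "relations": the degree-`n` part of the
homology of the quotient complex `(T/N, d)` where the grading of `T/N` is induced by `gr`.
Taking `N = ⊥` gives ordinary graded homology. -/
def Hgr (T : Type) [AddCommGroup T] [Module k T] (gr : ℤ → Submodule k T)
    (N : Submodule k T) (d : T →ₗ[k] T) (n : ℤ) : Type :=
  ↥((gr n ⊔ N) ⊓ Submodule.comap d N) ⧸
    Submodule.comap ((gr n ⊔ N) ⊓ Submodule.comap d N).subtype
      (Submodule.map d (gr (n + 1) ⊔ N) ⊔ N)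

instance (T : Type) [AddCommGroup T] [Module k T] (gr : ℤ → Submodule k T)
    (N : Submodule k T) (d : T →ₗ[k] T) (n : ℤ) : AddCommGroup (Hgr T gr N d n) :=
  inferInstanceAs (AddCommGroup (_ ⧸ _))
instance (T : Type) [AddCommGroup T] [Module k T] (gr : ℤ → Submodule k T)
    (N : Submodule k T) (d : T →ₗ[k] T) (n : ℤ) : Module k (Hgr T gr N d n) :=
  inferInstanceAs (Module k (_ ⧸ _))

/-- `f` induces an isomorphism on (graded) homology, with a degree shift `s`; stated
elementarily: the induced map on homology classes is surjective and injective. -/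
def IsQIsoDeg (T S : Type) [AddCommGroup T] [Module k T] [AddCommGroup S] [Module k S]
    (grT : ℤ → Submodule k T) (grS : ℤ → Submodule k S)
    (dT : T →ₗ[k] T) (dS : S →ₗ[k] S) (s : ℤ) (f : T →ₗ[k] S) : Prop :=
  ∀ n : ℤ,
    (∀ y ∈ grS (n + s), dS y = 0 →
      ∃ x ∈ grT n, dT x = 0 ∧ f x - y ∈ Submodule.map dS (grS (n + s + 1))) ∧
    (∀ x ∈ grT n, dT x = 0 → f x ∈ Submodule.map dS (grS (n + s + 1)) →
      x ∈ Submodule.map dT (grT (n + 1)))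

variable {A : DGA k}

/-- The bilinear "sandwich" map `(a, b) ↦ a · m · b` for a fixed element `m` of a bimodule. -/
def sandwich (M : DGBimod A) (m : M.V) : A.V →ₗ[k] A.V →ₗ[k] M.V :=
  LinearMap.mk₂ k (fun a b => M.actR (M.actL a m) b)
    (fun a₁ a₂ b => by simp)
    (fun c a b => by simp)
    (fun a b₁ b₂ => by simp)
    (fun c a b => by simp)

/-- The bimodule map `A ⊗ A → M`, `a ⊗ b ↦ a · m · b`. -/
def sandwichT (M : DGBimod A) (m : M.V) : (A.V ⊗[k] A.V) →ₗ[k] M.V :=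
  TensorProduct.lift (sandwich M m)

/-- `S'/S` is a free dg bimodule: there is a family of "generators" `g i` of degrees `deg i`,
closed cycles modulo `S`, which generate `S'` freely over `A ⊗ A` modulo `S`. -/
def IsFreeStep (M : DGBimod A) (S S' : Submodule k M.V) : Prop :=
  ∃ (I : Type) (g : I → M.V) (deg : I → ℤ),
    (∀ i, g i ∈ S') ∧ (∀ i, M.d (g i) ∈ S) ∧
    (∀ i p q, ∀ a ∈ A.gr p, ∀ b ∈ A.gr q, M.actR (M.actL a (g i)) b ∈ M.gr (p + q + deg i)) ∧
    S' ≤ S ⊔ (⨆ i, LinearMap.range (sandwichT M (g i))) ∧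
    (∀ (u : Finset I) (c : I → A.V ⊗[k] A.V),
      (∑ i ∈ u, sandwichT M (g i) (c i)) ∈ S → ∀ i ∈ u, c i = 0)

/-- As `IsFreeStep`, with a finite generating family. -/
def IsFreeStepFin (M : DGBimod A) (S S' : Submodule k M.V) : Prop :=
  ∃ (I : Type) (_ : Finite I) (g : I → M.V) (deg : I → ℤ),
    (∀ i, g i ∈ S') ∧ (∀ i, M.d (g i) ∈ S) ∧
    (∀ i p q, ∀ a ∈ A.gr p, ∀ b ∈ A.gr q, M.actR (M.actL a (g i)) b ∈ M.gr (p + q + deg i)) ∧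
    S' ≤ S ⊔ (⨆ i, LinearMap.range (sandwichT M (g i))) ∧
    (∀ (u : Finset I) (c : I → A.V ⊗[k] A.V),
      (∑ i ∈ u, sandwichT M (g i) (c i)) ∈ S → ∀ i ∈ u, c i = 0)

/-- A filtration exhibiting `M` as a cell bimodule. -/
def IsCellFiltration (M : DGBimod A) (Fil : ℕ → Submodule k M.V) : Prop :=
  Fil 0 = ⊥ ∧ Monotone Fil ∧ (⨆ n, Fil n) = ⊤ ∧
  (∀ n, ∀ x ∈ Fil n, M.d x ∈ Fil n) ∧
  (∀ n a, ∀ x ∈ Fil n, M.actL a x ∈ Fil n) ∧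
  (∀ n a, ∀ x ∈ Fil n, M.actR x a ∈ Fil n) ∧
  (∀ n, IsFreeStep M (Fil n) (Fil (n + 1)))

/-- A cell bimodule: admits a filtration with free subquotients. -/
def IsCellBimod (M : DGBimod A) : Prop := ∃ Fil, IsCellFiltration M Fil

/-- A finite cell bimodule: a finite filtration with finite-rank free subquotients. -/
def IsFiniteCellBimod (M : DGBimod A) : Prop :=
  ∃ Fil, (Fil 0 = ⊥ ∧ Monotone Fil ∧ (⨆ n, Fil n) = ⊤ ∧
    (∀ n, ∀ x ∈ Fil n, M.d x ∈ Fil n) ∧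
    (∀ n a, ∀ x ∈ Fil n, M.actL a x ∈ Fil n) ∧
    (∀ n a, ∀ x ∈ Fil n, M.actR x a ∈ Fil n) ∧
    (∀ n, IsFreeStepFin M (Fil n) (Fil (n + 1)))) ∧ (∃ n₀, Fil n₀ = ⊤)

/-- A (finite) cell retract: a subcomplex of a (finite) cell bimodule whose inclusion admits
a bimodule retraction. -/
def IsCellRetract (P : DGBimod A) : Prop :=
  ∃ (C : DGBimod A), IsCellBimod C ∧
    ∃ (ι : P.V →ₗ[k] C.V) (r : C.V →ₗ[k] P.V),
      IsBHom P C 0 ι ∧ IsBHom C P 0 r ∧ Function.Injective ι ∧ r.comp ι = LinearMap.id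

def IsFiniteCellRetract (P : DGBimod A) : Prop :=
  ∃ (C : DGBimod A), IsFiniteCellBimod C ∧
    ∃ (ι : P.V →ₗ[k] C.V) (r : C.V →ₗ[k] P.V),
      IsBHom P C 0 ι ∧ IsBHom C P 0 r ∧ Function.Injective ι ∧ r.comp ι = LinearMap.id

/-- `ρ : R → M` is a resolution: a quasi-isomorphism of dg bimodules from a cell retract. -/
def IsResolution (R M : DGBimod A) (ρ : R.V →ₗ[k] M.V) : Prop :=
  IsCellRetract R ∧ IsBHom R M 0 ρ ∧ IsQIsoDeg R.V M.V R.gr M.gr R.d M.d 0 ρ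

/-- A bimodule is perfect if it admits a resolution by a finite cell retract. -/
def IsPerfect (M : DGBimod A) : Prop :=
  ∃ (R : DGBimod A) (ρ : R.V →ₗ[k] M.V),
    IsFiniteCellRetract R ∧ IsBHom R M 0 ρ ∧ IsQIsoDeg R.V M.V R.gr M.gr R.d M.d 0 ρ

/-- `A` is homologically smooth: perfect as a bimodule over itself. -/
def HomSmooth (A : DGA k) : Prop := IsPerfect A.diag

/-- The homology of the dg algebra `A` in degree `n`. -/
abbrev AlgH (A : DGA k) (n : ℤ) := Hgr A.V A.gr ⊥ A.d n

/-- `A` is homologically proper: its total homology is finitely generated. -/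
def HomProper (A : DGA k) : Prop :=
  (∀ n, Module.Finite k (AlgH A n)) ∧ (Set.Finite {n : ℤ | Nontrivial (AlgH A n)})

/-- A dg bimodule is bounded if it is supported in finitely many gradings. -/
def BoundedBimod (M : DGBimod A) : Prop := ∃ u : Finset ℤ, ∀ i ∉ u, M.gr i = ⊥

/-! ### Bicomplexes and the spectral sequences of their two filtrations -/

/-- A bicomplex of `k`-modules "with relations", presented as one ambient module with a
bigrading by submodules, a horizontal differential `dh` (of bidegree `(-1,0)`), a vertical
differential `dv` (of bidegree `(0,-1)`) and a submodule `N` of relations (so that the actual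
bicomplex is the quotient by `N`; take `N = ⊥` for an honest bicomplex). -/
structure RelBicx (k : Type) [CommRing k] : Type 1 where
  T : Type
  [acg : AddCommGroup T]
  [mod : Module k T]
  gr : ℤ → ℤ → Submodule k T
  N : Submodule k T
  dh : T →ₗ[k] T
  dv : T →ₗ[k] T

attribute [instance] RelBicx.acg RelBicx.mod

namespace RelBicx

variable {k : Type} [CommRing k] (B : RelBicx k)

/-- The total differential. -/
def D : B.T →ₗ[k] B.T := B.dh + B.dv

/-- The column filtration (by the first index `p`) of the total complex, in total degree `n`. -/
def Fcol (p n : ℤ) : Submodule k B.T := ⨆ (i : ℤ) (_ : i ≤ p), B.gr i (n - i)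

/-- The row filtration (by the second index `q`) of the total complex, in total degree `n`. -/
def Frow (q n : ℤ) : Submodule k B.T := ⨆ (j : ℤ) (_ : j ≤ q), B.gr (n - j) j

/-- Approximate cycles for the spectral sequence of the filtration `F`:
elements of filtration `p` (mod `N`) whose total differential drops filtration by `r`. -/
def Zpage (F : ℤ → ℤ → Submodule k B.T) (r p n : ℤ) : Submodule k B.T :=
  (F p n ⊔ B.N) ⊓ Submodule.comap B.D (F (p - r) (n - 1) ⊔ B.N)

/-- The boundaries subobject for the `r`-th page at filtration `p`, total degree `n`. -/
def Bpage (F : ℤ → ℤ → Submodule k B.T) (r p n : ℤ) : Submodule k B.T :=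
  Submodule.map B.D (B.Zpage F (r - 1) (p + r - 1) (n + 1)) ⊔ B.Zpage F (r - 1) (p - 1) n ⊔ B.N

/-- The `r`-th page of the spectral sequence of the filtration `F`, at filtration degree `p`
and total degree `n` (the classical subquotient description `Z^r/B^r`). -/
def Epage (F : ℤ → ℤ → Submodule k B.T) (r p n : ℤ) : Type :=
  ↥(B.Zpage F r p n) ⧸
    Submodule.comap (B.Zpage F r p n).subtype (B.Bpage F r p n)

instance (F : ℤ → ℤ → Submodule k B.T) (r p n : ℤ) : AddCommGroup (B.Epage F r p n) :=
  inferInstanceAs (AddCommGroup (_ ⧸ _))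
instance (F : ℤ → ℤ → Submodule k B.T) (r p n : ℤ) : Module k (B.Epage F r p n) :=
  inferInstanceAs (Module k (_ ⧸ _))

/-- The spectral sequence `ᵛʰE` (filtration by columns; one first takes homology with respect
to the vertical differential). Indexing: `vhE r p q` is `ᵛʰE^r_{p,q}`. -/
def vhE (r p q : ℤ) : Type := B.Epage B.Fcol r p (p + q)

/-- The spectral sequence `ʰᵛE` (filtration by rows; one first takes homology with respect to
the horizontal differential), in the transposed indexing of Lipshitz–Treumann:
`hvE r p q` is `ʰᵛE^r_{p,q}`, whose filtration index is the row `q`. -/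
def hvE (r p q : ℤ) : Type := B.Epage B.Frow r q (p + q)

instance (r p q : ℤ) : AddCommGroup (B.vhE r p q) := inferInstanceAs (AddCommGroup (Epage _ _ _ _ _))
instance (r p q : ℤ) : Module k (B.vhE r p q) := inferInstanceAs (Module k (Epage _ _ _ _ _))
instance (r p q : ℤ) : AddCommGroup (B.hvE r p q) := inferInstanceAs (AddCommGroup (Epage _ _ _ _ _))
instance (r p q : ℤ) : Module k (B.hvE r p q) := inferInstanceAs (Module k (Epage _ _ _ _ _))

/-- Vanishing of the differential leaving the `r`-th page at position `(p, n)`: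
the total differential of any approximate cycle is, up to boundaries of earlier pages and
relations, an approximate cycle of deeper filtration. -/
def zeroDiff (F : ℤ → ℤ → Submodule k B.T) (r p n : ℤ) : Prop :=
  Submodule.map B.D (B.Zpage F r p n) ≤
    Submodule.map B.D (B.Zpage F (r - 1) (p - 1) n) ⊔ B.Zpage F (r - 1) (p - r - 1) (n - 1) ⊔ B.N

/-- The spectral sequence of the filtration `F` collapses at the `r₀`-th page. -/
def collapsesAt (F : ℤ → ℤ → Submodule k B.T) (r₀ : ℤ) : Prop :=
  ∀ r : ℤ, r₀ ≤ r → ∀ p n : ℤ, B.zeroDiff F r p n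

/-- The part of total degree `n` of the bicomplex. -/
def totGr (n : ℤ) : Submodule k B.T := ⨆ p : ℤ, B.gr p (n - p)

/-- The degree-`n` homology of the total complex (of the quotient by `N`). -/
def Htot (n : ℤ) : Type :=
  ↥((B.totGr n ⊔ B.N) ⊓ Submodule.comap B.D B.N) ⧸
    Submodule.comap ((B.totGr n ⊔ B.N) ⊓ Submodule.comap B.D B.N).subtype
      (Submodule.map B.D (B.totGr (n + 1) ⊔ B.N) ⊔ B.N)

instance (n : ℤ) : AddCommGroup (B.Htot n) := inferInstanceAs (AddCommGroup (_ ⧸ _))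
instance (n : ℤ) : Module k (B.Htot n) := inferInstanceAs (Module k (_ ⧸ _))

/-- The graded piece `F_p H_n / F_{p-1} H_n` of the filtration induced by `F` on the homology
of the total complex. -/
def grHtot (F : ℤ → ℤ → Submodule k B.T) (p n : ℤ) : Type :=
  ↥((F p n ⊔ B.N) ⊓ Submodule.comap B.D B.N) ⧸
    Submodule.comap ((F p n ⊔ B.N) ⊓ Submodule.comap B.D B.N).subtype
      (((F (p - 1) n ⊔ B.N) ⊓ Submodule.comap B.D B.N) ⊔
        Submodule.map B.D (B.totGr (n + 1) ⊔ B.N) ⊔ B.N)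

instance (F : ℤ → ℤ → Submodule k B.T) (p n : ℤ) : AddCommGroup (B.grHtot F p n) :=
  inferInstanceAs (AddCommGroup (_ ⧸ _))
instance (F : ℤ → ℤ → Submodule k B.T) (p n : ℤ) : Module k (B.grHtot F p n) :=
  inferInstanceAs (Module k (_ ⧸ _))

/-- The spectral sequence of the filtration `F` converges to the homology of the total
complex: for every position the pages eventually stabilize and agree with the associated
graded of the induced filtration on the homology of the total complex. -/
def convergesTo (F : ℤ → ℤ → Submodule k B.T) : Prop :=
  ∀ p n : ℤ, ∃ r₀ : ℤ, ∀ r : ℤ, r₀ ≤ r →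
    Nonempty (B.Epage F r p n ≃ₗ[k] B.grHtot F p n)

end RelBicx
/-! ### Hochschild chains, the involution `τ`, and the Hochschild–Tate bicomplex (over `𝔽₂`) -/

section Hochschild

variable {A : DGA (ZMod 2)} (R M : DGBimod A)

/-- The ambient space `R ⊗ M` of the Hochschild chain complex `HC(A, M)` (with respect to the
resolution `R` of the diagonal bimodule): `HC(A,M) = (R ⊗ M)/rel2`. -/
abbrev T2 := R.V ⊗[ZMod 2] M.V

/-- The differential `∂(r ⊗ m) = ∂r ⊗ m + r ⊗ ∂m` (char. 2). -/
def d2 : T2 R M →ₗ[ZMod 2] T2 R M :=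
  TensorProduct.map R.d LinearMap.id + TensorProduct.map LinearMap.id M.d

/-- The grading of `R ⊗ M`. -/
def gr2 (n : ℤ) : Submodule (ZMod 2) (T2 R M) :=
  Submodule.span (ZMod 2)
    {z | ∃ i j, ∃ r ∈ R.gr i, ∃ m ∈ M.gr j, i + j = n ∧ z = r ⊗ₜ[ZMod 2] m}

/-- The Hochschild relations `ra ⊗ m ∼ r ⊗ am` and `ar ⊗ m ∼ r ⊗ ma` (char. 2). -/
def rel2 : Submodule (ZMod 2) (T2 R M) :=
  Submodule.span (ZMod 2)
    ({z | ∃ r a m, z = (R.actR r a) ⊗ₜ[ZMod 2] m + r ⊗ₜ[ZMod 2] (M.actL a m)} ∪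
     {z | ∃ r a m, z = (R.actL a r) ⊗ₜ[ZMod 2] m + r ⊗ₜ[ZMod 2] (M.actR m a)})

/-- The underlying space of the Hochschild chain complex `HC(A, M)`. -/
abbrev HCQ := T2 R M ⧸ rel2 R M

/-- The Hochschild homology `HH_n(A, M)` (computed from the chosen resolution `R → A`). -/
abbrev HH (n : ℤ) := Hgr (T2 R M) (gr2 R M) (rel2 R M) (d2 R M) n

/-- The ambient space `R ⊗ (M ⊗ (R ⊗ M))` of the Hochschild chain complex of the derived
tensor product: `HC(A, M ⊗̃_A M) = (R ⊗ (M ⊠ R ⊠ M))/∼ = (R ⊗ M ⊗ R ⊗ M)/rel4`. -/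
abbrev T4 := R.V ⊗[ZMod 2] (M.V ⊗[ZMod 2] (R.V ⊗[ZMod 2] M.V))

/-- The differential of `R ⊗ M ⊗ R ⊗ M` (char. 2; no signs). -/
def d4 : T4 R M →ₗ[ZMod 2] T4 R M :=
  TensorProduct.map R.d LinearMap.id +
  TensorProduct.map LinearMap.id (TensorProduct.map M.d LinearMap.id +
    TensorProduct.map LinearMap.id (TensorProduct.map R.d LinearMap.id +
      TensorProduct.map LinearMap.id M.d))

/-- The grading of `R ⊗ M ⊗ R ⊗ M`. -/
def gr4 (n : ℤ) : Submodule (ZMod 2) (T4 R M) :=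
  Submodule.span (ZMod 2)
    {z | ∃ i₁ j₁ i₂ j₂, ∃ r ∈ R.gr i₁, ∃ m ∈ M.gr j₁, ∃ r' ∈ R.gr i₂, ∃ m' ∈ M.gr j₂,
      i₁ + j₁ + i₂ + j₂ = n ∧ z = r ⊗ₜ[ZMod 2] (m ⊗ₜ[ZMod 2] (r' ⊗ₜ[ZMod 2] m'))}

/-- The combined relations presenting `HC(A, M ⊗̃_A M)` as a quotient of `R ⊗ M ⊗ R ⊗ M`:
the two relations of the naive tensor products `M ⊠_A R ⊠_A M` and the two outer Hochschild
relations (char. 2). -/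
def rel4 : Submodule (ZMod 2) (T4 R M) :=
  Submodule.span (ZMod 2)
    ({z | ∃ r a m r' m', z = (R.actR r a) ⊗ₜ[ZMod 2] (m ⊗ₜ[ZMod 2] (r' ⊗ₜ[ZMod 2] m')) +
        r ⊗ₜ[ZMod 2] ((M.actL a m) ⊗ₜ[ZMod 2] (r' ⊗ₜ[ZMod 2] m'))} ∪
     {z | ∃ r a m r' m', z = (R.actL a r) ⊗ₜ[ZMod 2] (m ⊗ₜ[ZMod 2] (r' ⊗ₜ[ZMod 2] m')) +
        r ⊗ₜ[ZMod 2] (m ⊗ₜ[ZMod 2] (r' ⊗ₜ[ZMod 2] (M.actR m' a)))} ∪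
     {z | ∃ r a m r' m', z = r ⊗ₜ[ZMod 2] ((M.actR m a) ⊗ₜ[ZMod 2] (r' ⊗ₜ[ZMod 2] m')) +
        r ⊗ₜ[ZMod 2] (m ⊗ₜ[ZMod 2] ((R.actL a r') ⊗ₜ[ZMod 2] m'))} ∪
     {z | ∃ r a m r' m', z = r ⊗ₜ[ZMod 2] (m ⊗ₜ[ZMod 2] ((R.actR r' a) ⊗ₜ[ZMod 2] m')) +
        r ⊗ₜ[ZMod 2] (m ⊗ₜ[ZMod 2] (r' ⊗ₜ[ZMod 2] (M.actL a m')))})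


instance {A : DGA (ZMod 2)} (R M : DGBimod A) :
    HasQuotient (T4 R M) (Submodule (ZMod 2) (T4 R M)) := Submodule.hasQuotient

/-- The underlying space of the Hochschild chain complex `HC(A, M ⊗̃_A M)`. -/
abbrev HCQ4 := T4 R M ⧸ rel4 R M

/-- The Hochschild homology `HH_n(A, M ⊗̃_A M)` of the derived tensor square. -/
abbrev HH4 (n : ℤ) := Hgr (T4 R M) (gr4 R M) (rel4 R M) (d4 R M) n

/-- The involution `τ` of `R ⊗ (M ⊗ (R ⊗ M))` exchanging the two halves:
`r ⊗ (m ⊗ (r' ⊗ m')) ↦ r' ⊗ (m' ⊗ (r ⊗ m))`. -/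
def tau4 : T4 R M →ₗ[ZMod 2] T4 R M :=
  ((TensorProduct.assoc (ZMod 2) R.V M.V (R.V ⊗[ZMod 2] M.V)).toLinearMap).comp
    (((TensorProduct.comm (ZMod 2) (R.V ⊗[ZMod 2] M.V) (R.V ⊗[ZMod 2] M.V)).toLinearMap).comp
      ((TensorProduct.assoc (ZMod 2) R.V M.V (R.V ⊗[ZMod 2] M.V)).symm.toLinearMap))

/-- The Hochschild–Tate bicomplex `HC^{Tate}(A, M ⊗̃_A M)`: the `ℤ`-periodic bicomplex whose
columns are the Hochschild complex of `M ⊗̃_A M` and whose horizontal differential is `1 + τ`. -/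
def TateBicx : RelBicx (ZMod 2) where
  T := ℤ →₀ T4 R M
  gr := fun p q => Submodule.map (Finsupp.lsingle p) (gr4 R M q)
  N := ⨅ p : ℤ, Submodule.comap (Finsupp.lapply p) (rel4 R M)
  dv := Finsupp.mapRange.linearMap (d4 R M)
  dh := (Finsupp.lmapDomain (T4 R M) (ZMod 2) (fun p => p - 1)).comp
    (Finsupp.mapRange.linearMap (LinearMap.id + tau4 R M))


/-- An element of the Hochschild–Tate bicomplex concentrated in column `p`. -/
def tateSingle (p : ℤ) (x : T4 R M) : (TateBicx R M).T := Finsupp.single p x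

/-- A dg bimodule `M` is `π`-formal (with respect to the resolution `R` of the diagonal
bimodule) if the spectral sequence `ʰᵛE` of the Hochschild–Tate bicomplex of `M ⊗̃_A M`
collapses at the `E³`-page; equivalently, all the induced operations
`d^{2i} : HH_k(A,M) → HH_{k-i}(A,M)`, `i ≥ 2`, vanish. -/
def PiFormalBimod : Prop := (TateBicx R M).collapsesAt (TateBicx R M).Frow 3

/-- A dg algebra is `π`-formal if every dg bimodule over it is `π`-formal. -/
def PiFormalAlg (R : DGBimod A) : Prop := ∀ M : DGBimod A, PiFormalBimod R M

end Hochschild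

/-!
Let `R` resolve a perfect bimodule. Comparing `R` with a finite cell retract, the identity of `R`
is homotopic, say by `h`, to a map `e` which factors through a finite cell bimodule `C`.

Squaring gives a homotopy `H₀ = h ⊗ 1 + e ⊗ h` from `1` to `e ⊗ e` on `HC(M ⊗̃ M)`. It does not
commute with `τ`, but the commutator is the boundary of `H₁ = (h ⊗ h) τ`, and `H₁` commutes with
`τ`. Hence `H₀ + H₁` is a homotopy on the total complex of the Tate bicomplex, with components of
bidegrees `(0, 1)` and `(-1, 2)`, from `1` to `e ⊗ e`. The latter factors through the Tate bicomplex
of `C`; since `M` is bounded and `C` has finitely many generators, that bicomplex lives in a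
horizontal strip `|q| ≤ K`, so in each total degree it meets only finitely many columns and rows.

The homotopy raises either filtration by a bounded amount, so up to a bounded change of filtration
cycles and boundaries can be pushed into the strip, where the filtrations are finite, and this
forces convergence.
-/

/-! ### Lattices and subquotients -/

theorem eq_of_le_of_iSupIndep {ι L : Type*} [CompleteLattice L] [IsModularLattice L]
    {S T : ι → L} (hT : iSupIndep T) (hle : S ≤ T) (hS : ⨆ i, S i = ⊤) : S = T := by
  funext i
  refine eq_of_le_of_inf_le_of_sup_le (z := ⨆ (j) (_ : j ≠ i), S j) (hle i) ?_ ?_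
  · have hdisj : Disjoint (T i) (⨆ (j) (_ : j ≠ i), S j) :=
      (hT i).mono_right (iSup₂_mono fun j _ => hle j)
    exact hdisj.le_bot.trans bot_le
  · rw [iSup_split_single S i] at hS
    exact le_top.trans hS.ge

theorem le_iSup_lt_of_le_sup {L : Type*} [CompleteLattice L] {F S : ℕ → L} (h0 : F 0 = ⊥)
    (hstep : ∀ n, F (n + 1) ≤ F n ⊔ S n) (n : ℕ) : F n ≤ ⨆ m < n, S m := by
  induction n with
  | zero => exact h0.trans_le bot_le
  | succ n ih =>
    exact (hstep n).trans (sup_le (ih.trans (biSup_mono fun m hm => hm.trans n.lt_succ_self))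
      (le_iSup₂_of_le n n.lt_succ_self le_rfl))

section Subquotient

variable {V : Type*} [AddCommGroup V] [Module k V] {S T P Q : Submodule k V}

/-- The second isomorphism theorem for subquotients: if `S ≤ T` meets every class of `T / Q`, and
`P` and `Q` have the same trace on `S`, then the inclusion induces `S / P ≃ T / Q`. -/
def subquotientEquiv (hST : S ≤ T) (hTS : T ≤ S ⊔ Q) (hPQ : S ⊓ P = S ⊓ Q) :
    (S ⧸ P.comap S.subtype) ≃ₗ[k] (T ⧸ Q.comap T.subtype) :=
  let f := (Q.comap T.subtype).mkQ ∘ₗ Submodule.inclusion hST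
  have hker : P.comap S.subtype = LinearMap.ker f := by
    ext ⟨x, hx⟩
    have hx' := SetLike.ext_iff.1 hPQ x
    simpa [f, hx] using hx'
  have hsurj : Function.Surjective f := by
    intro y
    obtain ⟨⟨x, hx⟩, rfl⟩ := Submodule.mkQ_surjective _ y
    obtain ⟨s, hs, q, hq, rfl⟩ := Submodule.mem_sup.1 (hTS hx)
    refine ⟨⟨s, hs⟩, (Submodule.Quotient.eq _).2 ?_⟩
    simpa using hq
  (Submodule.quotEquivOfEq _ _ hker).trans (f.quotKerEquivOfSurjective hsurj)

theorem sup_le_comap_sup {S S' N : Submodule k V} {f : V →ₗ[k] V} (hN : N ≤ N.comap f)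
    (hS : S ≤ (S' ⊔ N).comap f) : S ⊔ N ≤ (S' ⊔ N).comap f :=
  sup_le hS (hN.trans (Submodule.comap_mono le_sup_right))

end Subquotient

/-! ### Convergence from deformations -/

namespace RelBicx

variable (B : RelBicx k)

/-- The cycles of the quotient complex `T / N` which lie in filtration `p`. -/
def cycles (F : ℤ → ℤ → Submodule k B.T) (p n : ℤ) : Submodule k B.T :=
  (F p n ⊔ B.N) ⊓ B.N.comap B.D

/-- A deformation of the complex `T / N` onto a part of it on which the filtration `F` is bounded
in each total degree: an endomorphism `φ` respecting `F`, homotopic to the identity through a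
homotopy `H` which raises filtration by at most `shift`. -/
structure FilteredDeformation (F : ℤ → ℤ → Submodule k B.T) where
  φ : B.T →ₗ[k] B.T
  H : B.T →ₗ[k] B.T
  shift : ℤ
  homotopy : φ + B.D ∘ₗ H + H ∘ₗ B.D = LinearMap.id
  φ_mem : ∀ p n, F p n ⊔ B.N ≤ (F p n ⊔ B.N).comap φ
  H_mem : ∀ p n, F p n ⊔ B.N ≤ (F (p + shift) (n + 1) ⊔ B.N).comap H
  exists_φ_low : ∀ n, ∃ a, ∀ p ≤ a, F p n ⊔ B.N ≤ B.N.comap φ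
  exists_φ_high : ∀ n, ∃ b, ∀ p ≥ b, B.totGr n ⊔ B.N ≤ (F p n ⊔ B.N).comap φ

variable {B} {F : ℤ → ℤ → Submodule k B.T} {r p n : ℤ}

theorem nonempty_Epage_equiv_grHtot (hDD : B.D ∘ₗ B.D = 0) (hDN : B.N ≤ B.N.comap B.D)
    (hmono : F (p - 1) n ≤ F p n) (htot : F (p + r - 1) (n + 1) ≤ B.totGr (n + 1))
    (hZ : B.Zpage F r p n ≤ B.cycles F p n ⊔ B.Bpage F r p n)
    (hB : (F p n ⊔ B.N) ⊓ (B.totGr (n + 1) ⊔ B.N).map B.D ≤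
      (F (p + r - 1) (n + 1) ⊔ B.N).map B.D) :
    Nonempty (B.Epage F r p n ≃ₗ[k] B.grHtot F p n) := by
  refine ⟨(subquotientEquiv (S := B.cycles F p n) ?_ hZ (le_antisymm ?_ ?_)).symm⟩
  · exact inf_le_inf_left _ (Submodule.comap_mono le_sup_right)
  · rintro z ⟨hz, hz'⟩
    refine ⟨hz, ?_⟩
    obtain ⟨v, hv, ν, hν, rfl⟩ := Submodule.mem_sup.1 hz'
    obtain ⟨w, hw, x, hx, rfl⟩ := Submodule.mem_sup.1 hv
    have hxF : x ∈ F p n ⊔ B.N := by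
      have := sub_mem (sub_mem hz.1 (Submodule.mem_sup_right hν)) (sup_le_sup_right hmono _ hw.1)
      rwa [add_sub_cancel_right, add_sub_cancel_left] at this
    obtain ⟨y, hy, rfl⟩ := hB ⟨hxF, hx⟩
    refine add_mem (Submodule.mem_sup_left (add_mem ?_ ?_)) (Submodule.mem_sup_right hν)
    · exact Submodule.mem_sup_right ⟨hw.1, Submodule.mem_sup_right hw.2⟩
    · refine Submodule.mem_sup_left ⟨y, ⟨hy, ?_⟩, rfl⟩
      rw [SetLike.mem_coe, Submodule.mem_comap]
      convert hxF using 3 <;> ring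
  · rintro z ⟨hz, hz'⟩
    refine ⟨hz, ?_⟩
    obtain ⟨v, hv, ν, hν, rfl⟩ := Submodule.mem_sup.1 hz'
    obtain ⟨_, ⟨y, hy, rfl⟩, w, hw, rfl⟩ := Submodule.mem_sup.1 hv
    have hDw : B.D w ∈ B.N := by
      have hz2 : B.D (B.D y + w + ν) ∈ B.N := hz.2
      rw [map_add, map_add, ← LinearMap.comp_apply, hDD, LinearMap.zero_apply, zero_add] at hz2
      exact (Submodule.add_mem_iff_left B.N (hDN hν)).1 hz2
    refine add_mem (Submodule.mem_sup_left (add_mem ?_ ?_)) (Submodule.mem_sup_right hν)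
    · exact Submodule.mem_sup_right ⟨y, sup_le_sup_right htot _ hy.1, rfl⟩
    · exact Submodule.mem_sup_left ⟨hw.1, hDw⟩

namespace FilteredDeformation

variable (Δ : B.FilteredDeformation F)

theorem homotopy_apply (x : B.T) : Δ.φ x + B.D (Δ.H x) + Δ.H (B.D x) = x :=
  LinearMap.congr_fun Δ.homotopy x

theorem homotopy_apply_D (hDD : B.D ∘ₗ B.D = 0) (x : B.T) :
    Δ.φ (B.D x) + B.D (Δ.H (B.D x)) = B.D x := by
  have hDDx : B.D (B.D x) = 0 := LinearMap.congr_fun hDD x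
  simpa [hDDx] using Δ.homotopy_apply (B.D x)

theorem φ_D (hDD : B.D ∘ₗ B.D = 0) (x : B.T) : Δ.φ (B.D x) = B.D (Δ.φ x) := by
  have hDDH : B.D (B.D (Δ.H x)) = 0 := LinearMap.congr_fun hDD _
  have h := congrArg B.D (Δ.homotopy_apply x)
  simp only [map_add, hDDH, add_zero] at h
  exact add_right_cancel ((Δ.homotopy_apply_D hDD x).trans h.symm)

theorem Zpage_le (hDD : B.D ∘ₗ B.D = 0) (hmono : ∀ n, Monotone fun p => F p n)
    (hlow : F (p - r) (n - 1) ⊔ B.N ≤ B.N.comap Δ.φ) (hr : Δ.shift + 1 < r) :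
    B.Zpage F r p n ≤ B.cycles F p n ⊔ B.Bpage F r p n := by
  have hle {p p' n : ℤ} (h : p ≤ p') : F p n ⊔ B.N ≤ F p' n ⊔ B.N :=
    sup_le_sup_right (hmono n h) _
  rintro x ⟨hx, hDx⟩
  have hφDx : Δ.φ (B.D x) ∈ B.N := hlow hDx
  have hHx : Δ.H x ∈ F (p + r - 1) (n + 1) ⊔ B.N := hle (by lia) (Δ.H_mem p n hx)
  have hHDx : Δ.H (B.D x) ∈ F (p - 1) n ⊔ B.N := by
    have := Δ.H_mem _ _ hDx
    rw [sub_add_cancel] at this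
    exact hle (by lia) this
  have hDHx : B.D (Δ.H x) ∈ F p n ⊔ B.N := by
    rw [← add_sub_cancel_left (Δ.φ x) (B.D (Δ.H x)), ← add_sub_cancel_right (Δ.φ x + _) (Δ.H _),
      Δ.homotopy_apply x]
    exact sub_mem (sub_mem hx (hle (by lia) hHDx)) (Δ.φ_mem p n hx)
  have hDHDx : B.D (Δ.H (B.D x)) ∈ F (p - r) (n - 1) ⊔ B.N := by
    rw [← add_sub_cancel_left (Δ.φ (B.D x)) (B.D _), Δ.homotopy_apply_D hDD x]
    exact sub_mem hDx (Submodule.mem_sup_right hφDx)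
  rw [← Δ.homotopy_apply x, add_assoc]
  refine add_mem (Submodule.mem_sup_left ⟨Δ.φ_mem p n hx, ?_⟩) (Submodule.mem_sup_right
    (Submodule.mem_sup_left (add_mem (Submodule.mem_sup_left ⟨_, ⟨hHx, ?_⟩, rfl⟩)
      (Submodule.mem_sup_right ⟨hHDx, ?_⟩))))
  · rw [SetLike.mem_coe, Submodule.mem_comap, ← Δ.φ_D hDD]
    exact hφDx
  · rw [SetLike.mem_coe, Submodule.mem_comap]
    convert hDHx using 3 <;> ring
  · rw [SetLike.mem_coe, Submodule.mem_comap]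
    convert hDHDx using 3; ring

theorem inf_map_D_le (hDD : B.D ∘ₗ B.D = 0) (hmono : ∀ n, Monotone fun p => F p n)
    (hhigh : B.totGr (n + 1) ⊔ B.N ≤ (F (p + r - 1) (n + 1) ⊔ B.N).comap Δ.φ)
    (hr : Δ.shift + 1 < r) :
    (F p n ⊔ B.N) ⊓ (B.totGr (n + 1) ⊔ B.N).map B.D ≤ (F (p + r - 1) (n + 1) ⊔ B.N).map B.D := by
  rintro _ ⟨hDy, y, hy, rfl⟩
  refine ⟨Δ.φ y + Δ.H (B.D y), add_mem (hhigh hy) ?_, ?_⟩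
  · exact sup_le_sup_right (hmono _ (by lia)) _ (Δ.H_mem p n hDy)
  · rw [map_add, ← Δ.φ_D hDD, Δ.homotopy_apply_D hDD]

theorem convergesTo (Δ : B.FilteredDeformation F) (hDD : B.D ∘ₗ B.D = 0)
    (hDN : B.N ≤ B.N.comap B.D) (hmono : ∀ n, Monotone fun p => F p n)
    (htot : ∀ p n, F p n ≤ B.totGr n) :
    B.convergesTo F := by
  intro p n
  obtain ⟨a, ha⟩ := Δ.exists_φ_low (n - 1)
  obtain ⟨b, hb⟩ := Δ.exists_φ_high (n + 1)
  refine ⟨max (max (p - a) (b - p + 1)) (Δ.shift + 2), fun r hr => ?_⟩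
  exact nonempty_Epage_equiv_grHtot hDD hDN (hmono n (by lia)) (htot _ _)
    (Δ.Zpage_le hDD hmono (ha _ (by lia)) (by lia))
    (Δ.inf_map_D_le hDD hmono (hb _ (by lia)) (by lia))

end FilteredDeformation

/-! ### Filtrations by a weight on bidegrees -/

variable (B)

/-- The filtration of the total complex by a weight `w` on bidegrees; the column and row
filtrations are the cases where `w i j` is `i` and `j`. -/
def weightFil (w : ℤ → ℤ → ℤ) (p n : ℤ) : Submodule k B.T :=
  ⨆ (i : ℤ) (j : ℤ) (_ : i + j = n ∧ w i j ≤ p), B.gr i j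

theorem Fcol_eq_weightFil : B.Fcol = B.weightFil fun i _ => i := by
  funext p n
  apply le_antisymm
  · exact iSup₂_le fun i hi => le_iSup₂_of_le i (n - i) (le_iSup_of_le ⟨by lia, hi⟩ le_rfl)
  · refine iSup₂_le fun i j => iSup_le ?_
    rintro ⟨rfl, hi⟩
    exact le_iSup₂_of_le i hi (by rw [add_sub_cancel_left])

theorem Frow_eq_weightFil : B.Frow = B.weightFil fun _ j => j := by
  funext p n
  apply le_antisymm
  · exact iSup₂_le fun j hj => le_iSup₂_of_le (n - j) j (le_iSup_of_le ⟨by lia, hj⟩ le_rfl)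
  · refine iSup₂_le fun i j => iSup_le ?_
    rintro ⟨rfl, hj⟩
    exact le_iSup₂_of_le j hj (by rw [add_sub_cancel_right])

/-- A deformation of the complex `T / N` onto a part supported in a horizontal strip `|j| ≤ K`, for
which the homotopy, like the total differential, has only components of low bidegree. -/
structure StripDeformation where
  φ : B.T →ₗ[k] B.T
  H : B.T →ₗ[k] B.T
  K : ℤ
  homotopy : φ + B.D ∘ₗ H + H ∘ₗ B.D = LinearMap.id
  φ_N : B.N ≤ B.N.comap φ
  H_N : B.N ≤ B.N.comap H
  φ_gr : ∀ i j, B.gr i j ≤ (B.gr i j).comap φ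
  H_gr : ∀ i j, B.gr i j ≤ (B.gr i (j + 1) ⊔ B.gr (i - 1) (j + 2)).comap H
  φ_strip : ∀ i j, K < |j| → B.gr i j ≤ B.N.comap φ

variable {B} {w : ℤ → ℤ → ℤ}

theorem gr_le_weightFil {i j p : ℤ} (hw : w i j ≤ p) : B.gr i j ≤ B.weightFil w p (i + j) :=
  le_iSup₂_of_le i j (le_iSup_of_le ⟨rfl, hw⟩ le_rfl)

theorem weightFil_le {S : Submodule k B.T}
    (h : ∀ i j, i + j = n → w i j ≤ p → B.gr i j ≤ S) : B.weightFil w p n ≤ S :=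
  iSup₂_le fun i j => iSup_le fun hij => h i j hij.1 hij.2

theorem monotone_weightFil (w : ℤ → ℤ → ℤ) (n : ℤ) : Monotone fun p => B.weightFil w p n := by
  intro p p' hp
  refine weightFil_le ?_
  rintro i j rfl hw
  exact gr_le_weightFil (hw.trans hp)

theorem weightFil_le_totGr (w : ℤ → ℤ → ℤ) (p n : ℤ) : B.weightFil w p n ≤ B.totGr n := by
  refine weightFil_le ?_
  rintro i j rfl -
  exact le_iSup_of_le i (by rw [add_sub_cancel_left])

namespace StripDeformation

variable (Δ : B.StripDeformation)

theorem exists_weightFil_le_comap_N (hstrip : ∀ n K, ∃ b, ∀ i j, i + j = n → |j| ≤ K → |w i j| ≤ b)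
    (n : ℤ) : ∃ a, ∀ p ≤ a, B.weightFil w p n ⊔ B.N ≤ B.N.comap Δ.φ := by
  obtain ⟨b, hb⟩ := hstrip n Δ.K
  refine ⟨-b - 1, fun p hp => sup_le (weightFil_le fun i j hij hw => Δ.φ_strip i j ?_) Δ.φ_N⟩
  by_contra! hj
  have := (abs_le.1 (hb i j hij hj)).1
  lia

theorem exists_totGr_le_comap_weightFil
    (hstrip : ∀ n K, ∃ b, ∀ i j, i + j = n → |j| ≤ K → |w i j| ≤ b) (n : ℤ) :
    ∃ b, ∀ p ≥ b, B.totGr n ⊔ B.N ≤ (B.weightFil w p n ⊔ B.N).comap Δ.φ := by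
  obtain ⟨b, hb⟩ := hstrip n Δ.K
  refine ⟨b, fun p hp => sup_le_comap_sup Δ.φ_N (iSup_le fun i => ?_)⟩
  rcases lt_or_ge Δ.K |n - i| with hj | hj
  · exact (Δ.φ_strip i _ hj).trans (Submodule.comap_mono le_sup_right)
  · have hw : w i (n - i) ≤ p := (abs_le.1 (hb i _ (by ring) hj)).2.trans hp
    refine (Δ.φ_gr i _).trans (Submodule.comap_mono (le_sup_of_le_left ?_))
    simpa using gr_le_weightFil (B := B) hw

/-- A strip deformation is filtered for every weight which is bounded on the finitely many
bidegrees of each strip in a given total degree, and which the homotopy raises by at most `s`. -/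
def toFilteredDeformation (s : ℤ) (hs₁ : ∀ i j, w i (j + 1) ≤ w i j + s)
    (hs₂ : ∀ i j, w (i - 1) (j + 2) ≤ w i j + s)
    (hstrip : ∀ n K, ∃ b, ∀ i j, i + j = n → |j| ≤ K → |w i j| ≤ b) :
    B.FilteredDeformation (B.weightFil w) where
  φ := Δ.φ
  H := Δ.H
  shift := s
  homotopy := Δ.homotopy
  φ_mem p n := by
    refine sup_le_comap_sup Δ.φ_N (weightFil_le ?_)
    rintro i j rfl hw
    exact (Δ.φ_gr i j).trans (Submodule.comap_mono (le_sup_of_le_left (gr_le_weightFil hw)))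
  H_mem p n := by
    refine sup_le_comap_sup Δ.H_N (weightFil_le ?_)
    rintro i j rfl hw
    refine (Δ.H_gr i j).trans (Submodule.comap_mono (le_sup_of_le_left (sup_le ?_ ?_)))
    · rw [add_assoc]
      exact gr_le_weightFil ((hs₁ i j).trans (add_le_add_left hw s))
    · rw [show i + j + 1 = i - 1 + (j + 2) by ring]
      exact gr_le_weightFil ((hs₂ i j).trans (add_le_add_left hw s))
  exists_φ_low := Δ.exists_weightFil_le_comap_N hstrip
  exists_φ_high := Δ.exists_totGr_le_comap_weightFil hstrip

theorem convergesTo_Fcol (Δ : B.StripDeformation) (hDD : B.D ∘ₗ B.D = 0)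
    (hDN : B.N ≤ B.N.comap B.D) : B.convergesTo B.Fcol := by
  rw [Fcol_eq_weightFil]
  refine (Δ.toFilteredDeformation 0 (by simp) (by simp) fun n K => ⟨|n| + K, ?_⟩).convergesTo
    hDD hDN (monotone_weightFil _) (weightFil_le_totGr _)
  rintro i j rfl hj
  calc |i| = |i + j - j| := by rw [add_sub_cancel_right]
    _ ≤ |i + j| + K := (abs_sub _ _).trans (add_le_add_right hj _)

theorem convergesTo_Frow (Δ : B.StripDeformation) (hDD : B.D ∘ₗ B.D = 0)
    (hDN : B.N ≤ B.N.comap B.D) : B.convergesTo B.Frow := by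
  rw [Frow_eq_weightFil]
  exact (Δ.toFilteredDeformation 2 (by simp) (by simp) fun n K =>
    ⟨K, fun _ _ _ hj => hj⟩).convergesTo hDD hDN (monotone_weightFil _) (weightFil_le_totGr _)

end StripDeformation

end RelBicx

/-! ### Generators of dg bimodules -/

theorem DGA.iSup_gr (A : DGA k) : ⨆ i, A.gr i = ⊤ :=
  A.internal.submodule_iSup_eq_top

theorem range_sandwichT_le {M : DGBimod A} {m : M.V} {S : Submodule k M.V}
    (h : ∀ p q, ∀ a ∈ A.gr p, ∀ b ∈ A.gr q, M.actR (M.actL a m) b ∈ S) :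
    LinearMap.range (sandwichT M m) ≤ S := by
  have hhom (p : ℤ) (a) (ha : a ∈ A.gr p) : ⊤ ≤ S.comap (sandwich M m a) :=
    A.iSup_gr ▸ iSup_le fun q b hb => h p q a ha b hb
  have hleft (b : A.V) : ⊤ ≤ S.comap ((sandwich M m).flip b) :=
    A.iSup_gr ▸ iSup_le fun p a ha => hhom p a ha trivial
  rw [LinearMap.range_eq_map, ← TensorProduct.span_tmul_eq_top, Submodule.map_span_le]
  rintro _ ⟨a, b, rfl⟩
  exact hleft b trivial

namespace DGBimod

theorem mem_gr_of_sandwich_mem {P : DGBimod A} {g : P.V} {d : ℤ}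
    (h : ∀ p q, ∀ a ∈ A.gr p, ∀ b ∈ A.gr q, P.actR (P.actL a g) b ∈ P.gr (p + q + d)) :
    g ∈ P.gr d := by
  simpa [P.actL_one, P.actR_one] using h 0 0 A.one A.one_gr A.one A.one_gr

theorem gr_le_of_sandwich_mem (P : DGBimod A) {ι : Type*} {g : ι → P.V} {deg : ι → ℤ}
    (hg : ∀ i, g i ∈ P.gr (deg i)) (htop : ⨆ i, LinearMap.range (sandwichT P (g i)) = ⊤)
    {m : ℤ} {S : Submodule k P.V} (hS : ∀ i p q, p + deg i + q = m → ∀ a ∈ A.gr p, ∀ b ∈ A.gr q,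
      P.actR (P.actL a (g i)) b ∈ S) : P.gr m ≤ S := by
  have hQ : (fun n => P.gr n ⊓ if n = m then S else ⊤) = P.gr := by
    refine eq_of_le_of_iSupIndep P.internal.submodule_iSupIndep (fun n => inf_le_left) ?_
    refine top_le_iff.1 (htop.ge.trans ?_)
    refine iSup_le fun i => range_sandwichT_le fun p q a ha b hb =>
      Submodule.mem_iSup_of_mem (p + deg i + q)
        ⟨P.actR_gr _ _ _ (P.actL_gr _ _ _ ha _ (hg i)) _ hb, ?_⟩
    split_ifs with hm
    exacts [hS i p q hm a ha b hb, Submodule.mem_top]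
  simpa using congrFun hQ m

end DGBimod

theorem IsFiniteCellBimod.isCellBimod {C : DGBimod A} (hC : IsFiniteCellBimod C) :
    IsCellBimod C := by
  obtain ⟨Fil, ⟨h0, hmono, htop, hd, hL, hR, hfree⟩, -⟩ := hC
  refine ⟨Fil, h0, hmono, htop, hd, hL, hR, fun n => ?_⟩
  obtain ⟨I, -, hI⟩ := hfree n
  exact ⟨I, hI⟩

theorem IsFiniteCellRetract.isCellRetract {P : DGBimod A} (hP : IsFiniteCellRetract P) :
    IsCellRetract P := by
  obtain ⟨C, hC, hretract⟩ := hP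
  exact ⟨C, hC.isCellBimod, hretract⟩

theorem IsFiniteCellBimod.exists_finite_generators {C : DGBimod A} (hC : IsFiniteCellBimod C) :
    ∃ (ι : Type) (_ : Finite ι) (g : ι → C.V) (deg : ι → ℤ), (∀ i, g i ∈ C.gr (deg i)) ∧
      ⨆ i, LinearMap.range (sandwichT C (g i)) = ⊤ := by
  obtain ⟨Fil, ⟨h0, -, -, -, -, -, hfree⟩, n₀, hn₀⟩ := hC
  choose I hfin g deg _ _ hgr hspan _ using hfree
  refine ⟨Σ m : Fin n₀, I m, inferInstance, fun x => g x.1 x.2, fun x => deg x.1 x.2,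
    fun x => DGBimod.mem_gr_of_sandwich_mem (hgr x.1 x.2), ?_⟩
  rw [← top_le_iff, ← hn₀]
  refine (le_iSup_lt_of_le_sup h0 hspan n₀).trans (iSup₂_le fun m hm => iSup_le fun i => ?_)
  exact le_iSup_of_le (⟨⟨m, hm⟩, i⟩ : Σ m : Fin n₀, I m) le_rfl

/-! ### Semifree bases -/

/-- The bimodule map out of the free bimodule on `ι` which sends the generators to `g`. -/
def freeMap (M : DGBimod A) {ι : Type} (g : ι → M.V) : (ι →₀ A.V ⊗[k] A.V) →ₗ[k] M.V :=
  Finsupp.lsum k fun i => sandwichT M (g i)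

theorem freeMap_single (M : DGBimod A) {ι : Type} (g : ι → M.V) (i : ι) (t : A.V ⊗[k] A.V) :
    freeMap M g (Finsupp.single i t) = sandwichT M (g i) t :=
  Finsupp.lsum_single ..

theorem range_freeMap (M : DGBimod A) {ι : Type} (g : ι → M.V) :
    LinearMap.range (freeMap M g) = ⨆ i, LinearMap.range (sandwichT M (g i)) := by
  apply le_antisymm
  · rintro _ ⟨c, rfl⟩
    rw [freeMap, Finsupp.lsum_apply]
    exact Submodule.sum_mem _ fun i _ => Submodule.mem_iSup_of_mem i ⟨_, rfl⟩
  · refine iSup_le fun i => ?_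
    rintro _ ⟨t, rfl⟩
    exact ⟨_, freeMap_single M g i t⟩

/-- A homogeneous basis of `C` as a bimodule without differential, with levels such that the
differential of a generator involves only generators of lower level. -/
structure SemifreeBasis (C : DGBimod A) where
  ι : Type
  level : ι → ℕ
  deg : ι → ℤ
  gen : ι → C.V
  gen_mem : ∀ i, gen i ∈ C.gr (deg i)
  bijective : Function.Bijective (freeMap C gen)
  d_gen_mem : ∀ i, C.d (gen i) ∈
    ⨆ (j) (_ : level j < level i), LinearMap.range (sandwichT C (gen j))

theorem injective_freeMap_sigma {C : DGBimod A} {Fil : ℕ → Submodule k C.V} (hmono : Monotone Fil)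
    (hL : ∀ n a, ∀ x ∈ Fil n, C.actL a x ∈ Fil n) (hR : ∀ n a, ∀ x ∈ Fil n, C.actR x a ∈ Fil n)
    {I : ℕ → Type} {g : ∀ n, I n → C.V} (hg : ∀ n i, g n i ∈ Fil (n + 1))
    (hindep : ∀ n (u : Finset (I n)) (c : I n → A.V ⊗[k] A.V),
      ∑ i ∈ u, sandwichT C (g n i) (c i) ∈ Fil n → ∀ i ∈ u, c i = 0) :
    Function.Injective (freeMap C fun x : Σ n, I n => g x.1 x.2) := by
  classical
  have hmem (n i t) : sandwichT C (g n i) t ∈ Fil (n + 1) :=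
    range_sandwichT_le (fun _ _ a _ b _ => hR _ b _ (hL _ a _ (hg n i))) ⟨t, rfl⟩
  rw [← LinearMap.ker_eq_bot, LinearMap.ker_eq_bot']
  intro c hc
  by_contra hne
  have hsupp : c.splitSupport.Nonempty := by
    obtain ⟨⟨n, i⟩, hi⟩ := Finsupp.ne_iff.1 hne
    refine ⟨n, (Finsupp.mem_splitSupport_iff_nonzero c n).2 (Finsupp.ne_iff.2 ⟨i, ?_⟩)⟩
    rwa [Finsupp.split_apply]
  obtain ⟨n, hn, hmax⟩ := c.splitSupport.exists_maximal hsupp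
  have hsum : ∑ m ∈ c.splitSupport, freeMap C (g m) (c.split m) = 0 := by
    rw [← hc]
    exact (Finsupp.sigma_sum c fun x t => sandwichT C (g x.1 x.2) t).symm
  have hlow : freeMap C (g n) (c.split n) ∈ Fil n := by
    rw [← Finset.add_sum_erase _ _ hn] at hsum
    rw [eq_neg_of_add_eq_zero_left hsum]
    refine neg_mem (sum_mem fun m hm => ?_)
    obtain ⟨hmn, hm⟩ := Finset.mem_erase.1 hm
    have hlt : m < n := lt_of_le_of_ne (not_lt.1 fun h => h.not_ge (hmax hm h.le)) hmn
    exact sum_mem fun i _ => hmono hlt (hmem m i _)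
  refine (Finsupp.mem_splitSupport_iff_nonzero c n).1 hn (Finsupp.ext fun i => ?_)
  by_contra hi
  exact hi (hindep n _ _ hlow i (Finsupp.mem_support_iff.2 hi))

theorem IsCellBimod.nonempty_semifreeBasis {C : DGBimod A} (hC : IsCellBimod C) :
    Nonempty (SemifreeBasis C) := by
  obtain ⟨Fil, h0, hmono, htop, -, hL, hR, hfree⟩ := hC
  choose I g deg hgFil hdg hgr hspan hindep using hfree
  have hFil (n : ℕ) : Fil n ≤
      ⨆ (x : Σ n, I n) (_ : x.1 < n), LinearMap.range (sandwichT C (g x.1 x.2)) :=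
    (le_iSup_lt_of_le_sup h0 hspan n).trans (iSup₂_le fun m hm => iSup_le fun i =>
      le_iSup₂_of_le (⟨m, i⟩ : Σ n, I n) hm le_rfl)
  refine ⟨⟨Σ n, I n, Sigma.fst, fun x => deg x.1 x.2, fun x => g x.1 x.2,
    fun x => DGBimod.mem_gr_of_sandwich_mem (hgr x.1 x.2),
    ⟨injective_freeMap_sigma hmono hL hR hgFil hindep, ?_⟩,
    fun x => hFil x.1 (hdg x.1 x.2)⟩⟩
  rw [← LinearMap.range_eq_top, range_freeMap, ← top_le_iff, ← htop]
  exact iSup_le fun n => (hFil n).trans (iSup_mono fun x => iSup_le fun _ => le_rfl)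

theorem mem_grHomSub_sandwich {C W : DGBimod A} {s : ℤ} {f : C.V →ₗ[k] W.V}
    (hf : f ∈ grHomSub C W s) (a b : A.V) (x : C.V) :
    f (C.actR (C.actL a x) b) = W.actR (W.actL a (f x)) b := by
  rw [hf.2.2, hf.2.1]

theorem range_sandwichT_le_eqLocus {C W : DGBimod A} {s : ℤ} {f f' : C.V →ₗ[k] W.V}
    (hf : f ∈ grHomSub C W s) (hf' : f' ∈ grHomSub C W s) {x : C.V} (hx : f x = f' x) :
    LinearMap.range (sandwichT C x) ≤ LinearMap.eqLocus f f' := by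
  refine range_sandwichT_le fun _ _ a _ b _ => ?_
  rw [LinearMap.mem_eqLocus, mem_grHomSub_sandwich hf, mem_grHomSub_sandwich hf', hx]

namespace SemifreeBasis

variable {C W : DGBimod A} (E : SemifreeBasis C)

theorem iSup_range_sandwichT : ⨆ i, LinearMap.range (sandwichT C (E.gen i)) = ⊤ := by
  rw [← range_freeMap, LinearMap.range_eq_top]
  exact E.bijective.2

theorem hom_ext {f f' : C.V →ₗ[k] W.V}
    (h : ∀ i a b, f (C.actR (C.actL a (E.gen i)) b) = f' (C.actR (C.actL a (E.gen i)) b)) :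
    f = f' := by
  rw [← LinearMap.eqLocus_eq_top, ← top_le_iff, ← E.iSup_range_sandwichT]
  exact iSup_le fun i => range_sandwichT_le fun _ _ a _ b _ => h i a b

/-- The bimodule map `C → W`, not compatible with the differentials in general, which sends the
generators to `w`. -/
def lift (w : E.ι → W.V) : C.V →ₗ[k] W.V :=
  freeMap W w ∘ₗ (LinearEquiv.ofBijective _ E.bijective).symm

theorem lift_sandwichT (w : E.ι → W.V) (i : E.ι) (t : A.V ⊗[k] A.V) :
    E.lift w (sandwichT C (E.gen i) t) = sandwichT W (w i) t := by
  rw [← freeMap_single, ← freeMap_single W w]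
  exact congrArg (freeMap W w) (LinearEquiv.ofBijective_symm_apply_apply _ _)

theorem lift_sandwich (w : E.ι → W.V) (i : E.ι) (a b : A.V) :
    E.lift w (C.actR (C.actL a (E.gen i)) b) = W.actR (W.actL a (w i)) b :=
  E.lift_sandwichT w i (a ⊗ₜ b)

theorem lift_gen (w : E.ι → W.V) (i : E.ι) : E.lift w (E.gen i) = w i := by
  simpa [C.actL_one, C.actR_one, W.actL_one, W.actR_one] using E.lift_sandwich w i A.one A.one

theorem lift_mem_grHomSub {w : E.ι → W.V} {s : ℤ} (hw : ∀ i, w i ∈ W.gr (E.deg i + s)) :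
    E.lift w ∈ grHomSub C W s := by
  refine ⟨fun m => C.gr_le_of_sandwich_mem E.gen_mem E.iSup_range_sandwichT
    (S := (W.gr (m + s)).comap (E.lift w)) (fun i p q hm a ha b hb => ?_),
    fun a => LinearMap.congr_fun (f := E.lift w ∘ₗ C.actL a) (g := W.actL a ∘ₗ E.lift w)
      (E.hom_ext fun i a' b => ?_),
    fun x b => LinearMap.congr_fun (f := E.lift w ∘ₗ C.actR.flip b)
      (g := W.actR.flip b ∘ₗ E.lift w) (E.hom_ext fun i a b' => ?_) x⟩
  · have := W.actR_gr _ _ _ (W.actL_gr _ _ _ ha _ (hw i)) _ hb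
    rw [Submodule.mem_comap, E.lift_sandwich, ← hm]
    convert this using 2
    ring
  · simp only [LinearMap.comp_apply, ← C.actLR, ← C.actL_mul, ← W.actLR, ← W.actL_mul,
      E.lift_sandwich]
  · simp only [LinearMap.comp_apply, LinearMap.flip_apply, C.actR_mul, W.actR_mul,
      E.lift_sandwich]

theorem lift_congr {w w' : E.ι → W.V} {n : ℕ} (h : ∀ j, E.level j < n → w j = w' j) {x : C.V}
    (hx : x ∈ ⨆ (j) (_ : E.level j < n), LinearMap.range (sandwichT C (E.gen j))) :
    E.lift w x = E.lift w' x := by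
  refine (iSup₂_le fun j hj => ?_ : _ ≤ LinearMap.eqLocus (E.lift w) (E.lift w')) hx
  refine range_sandwichT_le fun _ _ a _ b _ => ?_
  rw [LinearMap.mem_eqLocus, E.lift_sandwich, E.lift_sandwich, h j hj]

end SemifreeBasis

theorem exists_eq_truncate {ι X : Type*} [Zero X] (level : ι → ℕ) (F : ι → (ι → X) → X) :
    ∃ w : ι → X, ∀ i, w i = F i fun j => if level j < level i then w j else 0 := by
  let step (i : ι) (rec : ∀ j, level j < level i → X) : X :=
    F i fun j => if h : level j < level i then rec j h else 0
  refine ⟨(measure level).wf.fix step, fun i => ?_⟩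
  rw [WellFounded.fix_eq]
  simp only [step, dite_eq_ite]

/-! ### Bimodule maps and null-homotopies -/

section Composition

variable {X Y Z : DGBimod A} {s t r : ℤ} {f : X.V →ₗ[k] Y.V} {g : Y.V →ₗ[k] Z.V}

theorem comp_mem_grHomSub (hg : g ∈ grHomSub Y Z t) (hf : f ∈ grHomSub X Y s) (hr : s + t = r) :
    g ∘ₗ f ∈ grHomSub X Z r := by
  refine ⟨fun i x hx => ?_, fun a m => ?_, fun m a => ?_⟩
  · rw [← hr, ← add_assoc]
    exact hg.1 _ _ (hf.1 i x hx)
  · rw [LinearMap.comp_apply, hf.2.1, hg.2.1, LinearMap.comp_apply]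
  · rw [LinearMap.comp_apply, hf.2.2, hg.2.2, LinearMap.comp_apply]

theorem id_mem_grHomSub (X : DGBimod A) : LinearMap.id ∈ grHomSub X X 0 :=
  ⟨fun i x hx => by simpa using hx, fun _ _ => rfl, fun _ _ => rfl⟩

theorem mem_bcmSub_iff :
    f ∈ bcmSub X Y s ↔ f ∈ grHomSub X Y s ∧ Y.d ∘ₗ f = f ∘ₗ X.d :=
  ⟨fun h => ⟨⟨h.1, h.2.2⟩, LinearMap.ext fun x => (h.2.1 x).symm⟩,
    fun h => ⟨h.1.1, fun x => (LinearMap.congr_fun h.2 x).symm, h.1.2⟩⟩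

theorem comp_mem_bcmSub (hg : g ∈ bcmSub Y Z t) (hf : f ∈ bcmSub X Y s) (hr : s + t = r) :
    g ∘ₗ f ∈ bcmSub X Z r := by
  rw [mem_bcmSub_iff] at *
  exact ⟨comp_mem_grHomSub hg.1 hf.1 hr, by
    rw [← LinearMap.comp_assoc, hg.2, LinearMap.comp_assoc, hf.2, LinearMap.comp_assoc]⟩

theorem mem_nullHtpSub_iff :
    f ∈ nullHtpSub X Y s ↔ ∃ h ∈ grHomSub X Y (s + 1), Y.d ∘ₗ h + h ∘ₗ X.d = f :=
  Iff.rfl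

theorem comp_mem_nullHtpSub (hg : g ∈ bcmSub Y Z t) (hf : f ∈ nullHtpSub X Y s)
    (hr : s + t = r) : g ∘ₗ f ∈ nullHtpSub X Z r := by
  obtain ⟨h, hh, rfl⟩ := hf
  exact ⟨g ∘ₗ h, comp_mem_grHomSub (mem_bcmSub_iff.1 hg).1 hh (by lia),
    LinearMap.ext fun x => by simp [hg.2.1]⟩

theorem nullHtpSub_comp_mem (hg : g ∈ nullHtpSub Y Z t) (hf : f ∈ bcmSub X Y s)
    (hr : s + t = r) : g ∘ₗ f ∈ nullHtpSub X Z r := by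
  obtain ⟨h, hh, rfl⟩ := hg
  exact ⟨h ∘ₗ f, comp_mem_grHomSub hh (mem_bcmSub_iff.1 hf).1 (by lia),
    LinearMap.ext fun x => by simp [hf.2.1]⟩

end Composition

theorem negOnePow_smul {V : Type*} [AddCommGroup V] [Module (ZMod 2) V] (i : ℤ) (x : V) :
    (Int.negOnePow i : ℤ) • x = x := by
  rcases Int.even_or_odd i with hi | hi
  · simp [Int.negOnePow_even i hi]
  · simp [Int.negOnePow_odd i hi, ZModModule.neg_eq_self]

section CharTwo

variable {A : DGA (ZMod 2)}

theorem DGBimod.d_actL (P : DGBimod A) (a : A.V) (m : P.V) :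
    P.d (P.actL a m) = P.actL (A.d a) m + P.actL a (P.d m) := by
  have h : ⊤ ≤ LinearMap.eqLocus (P.d ∘ₗ P.actL.flip m)
      (P.actL.flip m ∘ₗ A.d + P.actL.flip (P.d m)) := by
    rw [← A.iSup_gr]
    refine iSup_le fun i a ha => ?_
    simpa [negOnePow_smul] using P.leibnizL i a ha m
  exact h (Submodule.mem_top (x := a))

theorem DGBimod.d_actR (P : DGBimod A) (m : P.V) (a : A.V) :
    P.d (P.actR m a) = P.actR (P.d m) a + P.actR m (A.d a) := by
  have h : ⊤ ≤ LinearMap.eqLocus (P.d ∘ₗ P.actR.flip a)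
      (P.actR.flip a ∘ₗ P.d + P.actR.flip (A.d a)) := by
    rw [← P.internal.submodule_iSup_eq_top]
    refine iSup_le fun i m hm => ?_
    simpa [negOnePow_smul] using P.leibnizR i m hm a
  exact h (Submodule.mem_top (x := m))

theorem nullHtpSub_le_bcmSub (X Y : DGBimod A) (s : ℤ) : nullHtpSub X Y s ≤ bcmSub X Y s := by
  rintro _ ⟨h, ⟨hgr, hL, hR⟩, rfl⟩
  refine ⟨fun i x hx => add_mem ?_ ?_, fun x => ?_, fun a m => ?_, fun m a => ?_⟩
  · have := Y.d_gr _ _ (hgr i x hx)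
    rwa [← add_assoc, add_sub_cancel_right] at this
  · have := hgr _ _ (X.d_gr i x hx)
    rwa [sub_add_add_cancel] at this
  · simp [X.d_d, Y.d_d]
  · simp only [LinearMap.add_apply, LinearMap.llcomp_apply, LinearMap.lcomp_apply, hL, X.d_actL,
      Y.d_actL, map_add]
    rw [add_add_add_comm, ZModModule.add_self, zero_add]
  · simp only [LinearMap.add_apply, LinearMap.llcomp_apply, LinearMap.lcomp_apply, hR, X.d_actR,
      Y.d_actR, map_add]
    rw [add_add_add_comm, ZModModule.add_self, add_zero]

/-! ### Maps into acyclic bimodules -/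

/-- Exactness of the underlying complex of a dg bimodule. -/
def IsAcyclic (W : DGBimod A) : Prop :=
  ∀ n, ∀ x ∈ W.gr n, W.d x = 0 → ∃ y ∈ W.gr (n + 1), W.d y = x

theorem IsAcyclic.exists_section {W : DGBimod A} (hW : IsAcyclic W) (n : ℤ) :
    ∃ σ : W.V → W.V, (∀ x, σ x ∈ W.gr (n + 1)) ∧
      ∀ x ∈ W.gr n, W.d x = 0 → W.d (σ x) = x := by
  have h (x : W.V) : ∃ y ∈ W.gr (n + 1), x ∈ W.gr n → W.d x = 0 → W.d y = x := by
    by_cases hx : x ∈ W.gr n ∧ W.d x = 0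
    · obtain ⟨y, hy, hyx⟩ := hW n x hx.1 hx.2
      exact ⟨y, hy, fun _ _ => hyx⟩
    · exact ⟨0, zero_mem _, fun h₁ h₂ => absurd ⟨h₁, h₂⟩ hx⟩
  choose σ hσ hσx using h
  exact ⟨σ, hσ, hσx⟩

variable {C P Q W X Y : DGBimod A} {s : ℤ}

theorem SemifreeBasis.exists_lift_gen_eq (E : SemifreeBasis C) (hW : IsAcyclic W)
    {u : C.V →ₗ[ZMod 2] W.V} (hu : u ∈ bcmSub C W s) :
    ∃ h ∈ grHomSub C W (s + 1), ∀ i, (W.d ∘ₗ h + h ∘ₗ C.d) (E.gen i) = u (E.gen i) := by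
  choose σ hσ hdσ using hW.exists_section
  obtain ⟨w, hw⟩ := exists_eq_truncate E.level fun i w' =>
    σ (E.deg i + s) (u (E.gen i) + E.lift w' (C.d (E.gen i)))
  have hmem : E.lift w ∈ grHomSub C W (s + 1) := E.lift_mem_grHomSub fun i => by
    rw [hw, ← add_assoc]
    exact hσ _ _
  have hw' (i : E.ι) : w i = σ (E.deg i + s) (u (E.gen i) + E.lift w (C.d (E.gen i))) := by
    rw [hw]
    congr 2
    exact E.lift_congr (fun j hj => if_pos hj) (E.d_gen_mem i)
  refine ⟨E.lift w, hmem, fun i => ?_⟩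
  induction hn : E.level i using Nat.strong_induction_on generalizing i with
  | _ n ih =>
    subst hn
    have hdw : W.d (E.lift w (C.d (E.gen i))) = u (C.d (E.gen i)) := by
      have hle : ⨆ (j) (_ : E.level j < E.level i), LinearMap.range (sandwichT C (E.gen j)) ≤
          LinearMap.eqLocus (W.d ∘ₗ E.lift w + E.lift w ∘ₗ C.d) u :=
        iSup₂_le fun j hj => range_sandwichT_le_eqLocus
          (mem_bcmSub_iff.1 (nullHtpSub_le_bcmSub C W s ⟨_, hmem, rfl⟩)).1
          (mem_bcmSub_iff.1 hu).1 (ih _ hj j rfl)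
      simpa [C.d_d] using hle (E.d_gen_mem i)
    have hgr : u (E.gen i) + E.lift w (C.d (E.gen i)) ∈ W.gr (E.deg i + s) := by
      refine add_mem (hu.1 _ _ (E.gen_mem i)) ?_
      have := hmem.1 _ _ (C.d_gr _ _ (E.gen_mem i))
      rwa [sub_add_add_cancel] at this
    have hcycle : W.d (u (E.gen i) + E.lift w (C.d (E.gen i))) = 0 := by
      rw [map_add, hdw, ← hu.2.1, ZModModule.add_self]
    rw [LinearMap.add_apply, LinearMap.comp_apply, LinearMap.comp_apply, E.lift_gen, hw',
      hdσ _ _ hgr hcycle, add_assoc, ZModModule.add_self, add_zero]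

theorem IsCellBimod.bcmSub_le_nullHtpSub (hC : IsCellBimod C) (hW : IsAcyclic W) :
    bcmSub C W s ≤ nullHtpSub C W s := by
  intro u hu
  obtain ⟨E⟩ := hC.nonempty_semifreeBasis
  obtain ⟨h, hh, hgen⟩ := E.exists_lift_gen_eq hW hu
  have hδ := (mem_bcmSub_iff.1 (nullHtpSub_le_bcmSub C W s ⟨h, hh, rfl⟩)).1
  refine mem_nullHtpSub_iff.2 ⟨h, hh, E.hom_ext fun i a b => ?_⟩
  rw [mem_grHomSub_sandwich (mem_bcmSub_iff.1 hu).1, ← hgen]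
  exact mem_grHomSub_sandwich hδ a b _

theorem IsCellRetract.bcmSub_le_nullHtpSub (hP : IsCellRetract P) (hW : IsAcyclic W) :
    bcmSub P W s ≤ nullHtpSub P W s := by
  intro u hu
  obtain ⟨C, hC, ι, r, hι, hr, -, hrι⟩ := hP
  have hnull := hC.bcmSub_le_nullHtpSub hW (comp_mem_bcmSub hu hr (zero_add s))
  have := nullHtpSub_comp_mem hnull hι (zero_add s)
  rwa [LinearMap.comp_assoc, hrι, LinearMap.comp_id] at this

end CharTwo

theorem isInternal_prod {ι V W : Type*} [DecidableEq ι] [AddCommGroup V] [Module k V]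
    [AddCommGroup W] [Module k W] {g : ι → Submodule k V} {g' : ι → Submodule k W}
    (hg : DirectSum.IsInternal g) (hg' : DirectSum.IsInternal g') :
    DirectSum.IsInternal fun i => (g i).prod (g' i) := by
  refine DirectSum.isInternal_submodule_of_iSupIndep_of_iSup_eq_top (fun i => ?_) ?_
  · have hle : ⨆ (j) (_ : j ≠ i), (g j).prod (g' j) ≤
        (⨆ (j) (_ : j ≠ i), g j).prod (⨆ (j) (_ : j ≠ i), g' j) :=
      iSup₂_le fun j hj => Submodule.prod_mono (le_iSup₂_of_le j hj le_rfl)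
        (le_iSup₂_of_le j hj le_rfl)
    refine Disjoint.mono_right hle (disjoint_iff.2 ?_)
    rw [Submodule.prod_inf_prod, (hg.submodule_iSupIndep i).eq_bot,
      (hg'.submodule_iSupIndep i).eq_bot, Submodule.prod_bot]
  · rw [eq_top_iff, ← LinearMap.sup_range_inl_inr, LinearMap.range_eq_map, LinearMap.range_eq_map,
      ← hg.submodule_iSup_eq_top, ← hg'.submodule_iSup_eq_top, Submodule.map_iSup,
      Submodule.map_iSup]
    refine sup_le (iSup_mono fun i => ?_) (iSup_mono fun i => ?_)
    · rw [Submodule.map_inl]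
      exact Submodule.prod_mono le_rfl bot_le
    · rw [Submodule.map_inr]
      exact Submodule.prod_mono bot_le le_rfl

theorem isInternal_comp_equiv {ι κ V : Type*} [DecidableEq ι] [DecidableEq κ] [AddCommGroup V]
    [Module k V] {g : ι → Submodule k V} (hg : DirectSum.IsInternal g) (e : κ ≃ ι) :
    DirectSum.IsInternal (g ∘ e) :=
  DirectSum.isInternal_submodule_of_iSupIndep_of_iSup_eq_top
    (hg.submodule_iSupIndep.comp e.injective)
    ((e.iSup_comp (g := g)).trans hg.submodule_iSup_eq_top)

theorem eq_of_add_eq_zero {V : Type*} [AddCommGroup V] [Module (ZMod 2) V] {x y : V}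
    (h : x + y = 0) : x = y := by
  rwa [← ZModModule.sub_eq_add, sub_eq_zero] at h

/-! ### Mapping cones -/

section CharTwo

variable {A : DGA (ZMod 2)} {P X Y : DGBimod A} {s : ℤ} {ρ : X.V →ₗ[ZMod 2] Y.V}

/-- The mapping cone of a chain map `ρ : X → Y`, i.e. `Y ⊕ X[1]` with the differential
`(y, x) ↦ (∂y + ρ x, ∂x)`. No signs are needed in characteristic two. -/
def cone (hρ : ρ ∈ bcmSub X Y 0) : DGBimod A where
  V := Y.V × X.V
  gr n := (Y.gr n).prod (X.gr (n - 1))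
  internal := isInternal_prod Y.internal (isInternal_comp_equiv X.internal (Equiv.subRight 1))
  d := (Y.d.coprod ρ).prod (X.d ∘ₗ LinearMap.snd _ _ _)
  d_d x := by simp [Y.d_d, X.d_d, hρ.2.1, ZModModule.add_self]
  d_gr i x hx := by
    refine ⟨add_mem (Y.d_gr _ _ hx.1) ?_, X.d_gr _ _ hx.2⟩
    simpa using hρ.1 _ _ hx.2
  actL := LinearMap.prodMapLinear _ _ _ _ _ _ ∘ₗ Y.actL.prod X.actL
  actR := (LinearMap.prodMapLinear _ _ _ _ _ _ ∘ₗ Y.actR.flip.prod X.actR.flip).flip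
  actL_one m := Prod.ext (Y.actL_one _) (X.actL_one _)
  actR_one m := Prod.ext (Y.actR_one _) (X.actR_one _)
  actL_mul a b m := Prod.ext (Y.actL_mul _ _ _) (X.actL_mul _ _ _)
  actR_mul m a b := Prod.ext (Y.actR_mul _ _ _) (X.actR_mul _ _ _)
  actLR a m b := Prod.ext (Y.actLR _ _ _) (X.actLR _ _ _)
  actL_gr i j a ha m hm :=
    ⟨Y.actL_gr _ _ _ ha _ hm.1, by
      simpa [add_sub_assoc] using X.actL_gr _ _ _ ha _ hm.2⟩
  actR_gr i j m hm a ha :=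
    ⟨Y.actR_gr _ _ _ hm.1 _ ha, by
      simpa [sub_add_eq_add_sub] using X.actR_gr _ _ _ hm.2 _ ha⟩
  leibnizL i a _ m := by
    rw [negOnePow_smul]
    ext <;> simp [Y.d_actL, X.d_actL, hρ.2.2.1, add_assoc]
  leibnizR j m _ a := by
    rw [negOnePow_smul]
    ext <;> simp [Y.d_actR, X.d_actR, hρ.2.2.2, add_right_comm]

theorem isAcyclic_cone (hρ : ρ ∈ bcmSub X Y 0)
    (hq : IsQIsoDeg X.V Y.V X.gr Y.gr X.d Y.d 0 ρ) : IsAcyclic (cone hρ) := by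
  rintro n ⟨y, x⟩ ⟨hy, hx⟩ hd
  obtain ⟨hdy, hdx⟩ : Y.d y + ρ x = 0 ∧ X.d x = 0 := Prod.mk.inj hd
  have hρx : ρ x = Y.d y := (eq_of_add_eq_zero hdy).symm
  obtain ⟨x', hx', rfl⟩ := (hq (n - 1)).2 x hx hdx ⟨y, by simpa using hy, hρx.symm⟩
  rw [sub_add_cancel] at hx'
  have hcycle : Y.d (y + ρ x') = 0 := by rw [map_add, ← hρ.2.1, hρx, ZModModule.add_self]
  have hgr : y + ρ x' ∈ Y.gr (n + 0) := add_mem (by simpa using hy) (hρ.1 _ _ hx')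
  obtain ⟨x'', hx'', hdx'', y', hy', hdy'⟩ := (hq n).1 _ hgr hcycle
  refine ⟨(y', x'' + x'), ⟨by simpa using hy', ?_⟩, ?_⟩
  · simpa using add_mem hx'' hx'
  · refine Prod.ext ?_ ?_
    · change Y.d y' + ρ (x'' + x') = y
      rw [hdy', map_add, ZModModule.sub_eq_add, add_add_add_comm, ZModModule.add_self, zero_add,
        add_assoc, ZModModule.add_self, add_zero]
    · change X.d (x'' + x') = X.d x'
      rw [map_add, hdx'', zero_add]

theorem mem_grHomSub_cone_iff (hρ : ρ ∈ bcmSub X Y 0) {h : P.V →ₗ[ZMod 2] Y.V × X.V} :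
    h ∈ grHomSub P (cone hρ) s ↔
      LinearMap.fst _ _ _ ∘ₗ h ∈ grHomSub P Y s ∧
        LinearMap.snd _ _ _ ∘ₗ h ∈ grHomSub P X (s - 1) := by
  constructor
  · rintro ⟨hg, hL, hR⟩
    refine ⟨⟨fun i x hx => (hg i x hx).1, fun a m => congrArg Prod.fst (hL a m),
      fun m a => congrArg Prod.fst (hR m a)⟩, fun i x hx => ?_,
      fun a m => congrArg Prod.snd (hL a m), fun m a => congrArg Prod.snd (hR m a)⟩
    rw [← add_sub_assoc]
    exact (hg i x hx).2
  · rintro ⟨⟨hg, hL, hR⟩, hg', hL', hR'⟩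
    refine ⟨fun i x hx => ⟨hg i x hx, ?_⟩, fun a m => Prod.ext (hL a m) (hL' a m),
      fun m a => Prod.ext (hR m a) (hR' m a)⟩
    rw [add_sub_assoc]
    exact hg' i x hx

theorem IsCellRetract.exists_add_comp_mem_nullHtpSub (hP : IsCellRetract P)
    (hρ : ρ ∈ bcmSub X Y 0) (hq : IsQIsoDeg X.V Y.V X.gr Y.gr X.d Y.d 0 ρ)
    {v : P.V →ₗ[ZMod 2] Y.V} (hv : v ∈ bcmSub P Y s) :
    ∃ f ∈ bcmSub P X s, v + ρ ∘ₗ f ∈ nullHtpSub P Y s := by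
  rw [mem_bcmSub_iff] at hv
  have hcone : v.prod 0 ∈ bcmSub P (cone hρ) s := by
    refine mem_bcmSub_iff.2 ⟨(mem_grHomSub_cone_iff hρ).2 ⟨hv.1, zero_mem _⟩, ?_⟩
    refine LinearMap.ext fun x => Prod.ext ?_ ?_
    · change Y.d (v x) + ρ 0 = v (P.d x)
      rw [map_zero, add_zero]
      exact LinearMap.congr_fun hv.2 x
    · exact X.d.map_zero
  obtain ⟨h, hh, hδ⟩ := hP.bcmSub_le_nullHtpSub (isAcyclic_cone hρ hq) hcone
  obtain ⟨hfst, hsnd⟩ := (mem_grHomSub_cone_iff hρ).1 hh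
  have hδ (x : P.V) : Y.d (h x).1 + ρ (h x).2 + (h (P.d x)).1 = v x ∧
      X.d (h x).2 + (h (P.d x)).2 = 0 := Prod.mk.inj (LinearMap.congr_fun hδ x)
  rw [add_sub_cancel_right] at hsnd
  refine ⟨LinearMap.snd _ _ _ ∘ₗ h, mem_bcmSub_iff.2 ⟨hsnd, LinearMap.ext fun x => ?_⟩,
    LinearMap.fst _ _ _ ∘ₗ h, hfst, LinearMap.ext fun x => ?_⟩
  · exact eq_of_add_eq_zero (hδ x).2
  · change Y.d (h x).1 + (h (P.d x)).1 = v x + ρ (h x).2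
    rw [← (hδ x).1, add_right_comm (Y.d _), add_assoc (_ + _), ZModModule.add_self, add_zero]

theorem IsCellRetract.mem_nullHtpSub_of_comp_mem (hP : IsCellRetract P)
    (hρ : ρ ∈ bcmSub X Y 0) (hq : IsQIsoDeg X.V Y.V X.gr Y.gr X.d Y.d 0 ρ)
    {u : P.V →ₗ[ZMod 2] X.V} (hu : u ∈ bcmSub P X s) (hρu : ρ ∘ₗ u ∈ nullHtpSub P Y s) :
    u ∈ nullHtpSub P X s := by
  obtain ⟨h₀, hh₀, hδ₀⟩ := hρu
  have hδ₀ (x : P.V) : Y.d (h₀ x) + h₀ (P.d x) = ρ (u x) := LinearMap.congr_fun hδ₀ x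
  rw [mem_bcmSub_iff] at hu
  have hcone : h₀.prod u ∈ bcmSub P (cone hρ) (s + 1) := by
    refine mem_bcmSub_iff.2
      ⟨(mem_grHomSub_cone_iff hρ).2 ⟨hh₀, by rw [add_sub_cancel_right]; exact hu.1⟩, ?_⟩
    refine LinearMap.ext fun x => Prod.ext ?_ (LinearMap.congr_fun hu.2 x)
    change Y.d (h₀ x) + ρ (u x) = h₀ (P.d x)
    rw [← hδ₀, ← add_assoc, ZModModule.add_self, zero_add]
  obtain ⟨h, hh, hδ⟩ := hP.bcmSub_le_nullHtpSub (isAcyclic_cone hρ hq) hcone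
  have hsnd := ((mem_grHomSub_cone_iff hρ).1 hh).2
  rw [add_sub_cancel_right] at hsnd
  exact ⟨LinearMap.snd _ _ _ ∘ₗ h, hsnd,
    LinearMap.ext fun x => congrArg Prod.snd (LinearMap.congr_fun hδ x)⟩

/-! ### Resolutions of perfect bimodules -/

theorem IsResolution.exists_finite_cell_domination {R : DGBimod A} {ρ : R.V →ₗ[ZMod 2] X.V}
    (hres : IsResolution R X ρ) (hX : IsPerfect X) :
    ∃ C : DGBimod A, IsFiniteCellBimod C ∧ ∃ α ∈ bcmSub R C 0, ∃ β ∈ bcmSub C R 0,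
      LinearMap.id + β ∘ₗ α ∈ nullHtpSub R R 0 := by
  obtain ⟨hR, hρ, hq⟩ := hres
  obtain ⟨P, ρ', hP, hρ', hq'⟩ := hX
  obtain ⟨f, hf, hρf⟩ := hR.exists_add_comp_mem_nullHtpSub hρ' hq' hρ
  obtain ⟨g, hg, hρg⟩ := hP.isCellRetract.exists_add_comp_mem_nullHtpSub hρ hq hρ'
  have hid : LinearMap.id ∈ bcmSub R R 0 := mem_bcmSub_iff.2 ⟨id_mem_grHomSub R, rfl⟩
  have hgf : LinearMap.id + g ∘ₗ f ∈ nullHtpSub R R 0 := by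
    refine hR.mem_nullHtpSub_of_comp_mem hρ hq
      (add_mem hid (comp_mem_bcmSub hg hf (add_zero 0))) ?_
    have hcomp : ρ ∘ₗ (LinearMap.id + g ∘ₗ f) = (ρ + ρ' ∘ₗ f) + (ρ' + ρ ∘ₗ g) ∘ₗ f := by
      rw [LinearMap.comp_add, LinearMap.comp_id, LinearMap.add_comp, LinearMap.comp_assoc,
        ← add_assoc, add_assoc ρ, ZModModule.add_self, add_zero]
    rw [hcomp]
    exact add_mem hρf (nullHtpSub_comp_mem hρg hf (add_zero 0))
  obtain ⟨C, hC, ι, r, hι, hr, -, hrι⟩ := hP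
  refine ⟨C, hC, ι ∘ₗ f, comp_mem_bcmSub hι hf (add_zero 0), g ∘ₗ r,
    comp_mem_bcmSub hg hr (add_zero 0), ?_⟩
  rwa [LinearMap.comp_assoc, ← LinearMap.comp_assoc f, hrι, LinearMap.id_comp]

end CharTwo

/-! ### Tensor products of differentials -/

/-- The differential `d ⊗ 1 + 1 ⊗ d'` on a tensor product, without Koszul signs. -/
def tensorD {V W : Type*} [AddCommGroup V] [Module k V] [AddCommGroup W] [Module k W]
    (d : V →ₗ[k] V) (d' : W →ₗ[k] W) : V ⊗[k] W →ₗ[k] V ⊗[k] W :=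
  TensorProduct.map d LinearMap.id + TensorProduct.map LinearMap.id d'

section

variable {V W : Type*} [AddCommGroup V] [Module k V] [AddCommGroup W] [Module k W]

theorem tensorD_comp_map_add {d a : V →ₗ[k] V} {d' b : W →ₗ[k] W} :
    tensorD d d' ∘ₗ TensorProduct.map a b + TensorProduct.map a b ∘ₗ tensorD d d' =
      TensorProduct.map (d ∘ₗ a + a ∘ₗ d) b + TensorProduct.map a (d' ∘ₗ b + b ∘ₗ d') := by
  simp only [tensorD, LinearMap.add_comp, LinearMap.comp_add, ← TensorProduct.map_comp,
    LinearMap.id_comp, LinearMap.comp_id, TensorProduct.map_add_left, TensorProduct.map_add_right]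
  abel

end

theorem tensorD_comp_self {V W : Type*} [AddCommGroup V] [Module (ZMod 2) V] [AddCommGroup W]
    [Module (ZMod 2) W] {d : V →ₗ[ZMod 2] V} {d' : W →ₗ[ZMod 2] W} (hd : d ∘ₗ d = 0)
    (hd' : d' ∘ₗ d' = 0) : tensorD d d' ∘ₗ tensorD d d' = 0 := by
  simp only [tensorD, LinearMap.add_comp, LinearMap.comp_add, ← TensorProduct.map_comp,
    LinearMap.id_comp, LinearMap.comp_id, hd, hd', TensorProduct.map_zero_left,
    TensorProduct.map_zero_right, zero_add, add_zero]
  exact ZModModule.add_self _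

/-! ### Hochschild chains of the derived tensor square -/

section CharTwo

variable {A : DGA (ZMod 2)} {R S Q : DGBimod A} (M : DGBimod A) {s t : ℤ}

/-- The map `a ⊗ 1 ⊗ b ⊗ 1` from `R ⊗ M ⊗ R ⊗ M` to `S ⊗ M ⊗ S ⊗ M`. -/
def map4 (a b : R.V →ₗ[ZMod 2] S.V) : T4 R M →ₗ[ZMod 2] T4 S M :=
  TensorProduct.map a (TensorProduct.map LinearMap.id (TensorProduct.map b LinearMap.id))

variable {M}

theorem map4_tmul (a b : R.V →ₗ[ZMod 2] S.V) (r : R.V) (m : M.V) (r' : R.V) (m' : M.V) :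
    map4 M a b (r ⊗ₜ (m ⊗ₜ (r' ⊗ₜ m'))) = a r ⊗ₜ (m ⊗ₜ (b r' ⊗ₜ m')) :=
  rfl

theorem tau4_tmul (r : R.V) (m : M.V) (r' : R.V) (m' : M.V) :
    tau4 R M (r ⊗ₜ (m ⊗ₜ (r' ⊗ₜ m'))) = r' ⊗ₜ (m' ⊗ₜ (r ⊗ₜ m)) :=
  rfl

theorem d4_tmul (r : R.V) (m : M.V) (r' : R.V) (m' : M.V) :
    d4 R M (r ⊗ₜ (m ⊗ₜ (r' ⊗ₜ m'))) = R.d r ⊗ₜ (m ⊗ₜ (r' ⊗ₜ m')) +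
      (r ⊗ₜ (M.d m ⊗ₜ (r' ⊗ₜ m')) + (r ⊗ₜ (m ⊗ₜ (R.d r' ⊗ₜ m')) +
        r ⊗ₜ (m ⊗ₜ (r' ⊗ₜ M.d m')))) := by
  simp [d4, tmul_add]

theorem map4_id : map4 M LinearMap.id LinearMap.id = (LinearMap.id : T4 R M →ₗ[ZMod 2] _) := by
  simp only [map4, TensorProduct.map_id]

theorem map4_comp (a b : R.V →ₗ[ZMod 2] S.V) (a' b' : S.V →ₗ[ZMod 2] Q.V) :
    map4 M (a' ∘ₗ a) (b' ∘ₗ b) = map4 M a' b' ∘ₗ map4 M a b := by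
  simp only [map4, ← TensorProduct.map_comp, LinearMap.id_comp]

theorem map4_add_left (a a' b : R.V →ₗ[ZMod 2] S.V) :
    map4 M (a + a') b = map4 M a b + map4 M a' b :=
  TensorProduct.map_add_left ..

theorem map4_add_right (a b b' : R.V →ₗ[ZMod 2] S.V) :
    map4 M a (b + b') = map4 M a b + map4 M a b' := by
  simp only [map4, TensorProduct.map_add_left, TensorProduct.map_add_right]

theorem map4_zero_left (b : R.V →ₗ[ZMod 2] S.V) : map4 M 0 b = 0 :=
  TensorProduct.map_zero_left _

theorem map4_zero_right (a : R.V →ₗ[ZMod 2] S.V) : map4 M a 0 = 0 := by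
  simp only [map4, TensorProduct.map_zero_left, TensorProduct.map_zero_right]

theorem tau4_comp_map4 (a b : R.V →ₗ[ZMod 2] S.V) :
    tau4 S M ∘ₗ map4 M a b = map4 M b a ∘ₗ tau4 R M := by
  ext
  rfl

theorem tau4_comp_self : tau4 R M ∘ₗ tau4 R M = LinearMap.id := by
  ext
  rfl

theorem tau4_comp_d4 : tau4 R M ∘ₗ d4 R M = d4 R M ∘ₗ tau4 R M := by
  ext r m r' m'
  simp only [TensorProduct.AlgebraTensorModule.curry_apply, LinearMap.restrictScalars_self,
    TensorProduct.curry_apply, LinearMap.comp_apply, d4_tmul, tau4_tmul, map_add]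
  abel

theorem d4_comp_self : d4 R M ∘ₗ d4 R M = 0 :=
  have hR : R.d ∘ₗ R.d = 0 := LinearMap.ext R.d_d
  have hM : M.d ∘ₗ M.d = 0 := LinearMap.ext M.d_d
  tensorD_comp_self hR (tensorD_comp_self hM (tensorD_comp_self hR hM))

theorem d4_comp_map4_add (a b : R.V →ₗ[ZMod 2] R.V) :
    d4 R M ∘ₗ map4 M a b + map4 M a b ∘ₗ d4 R M =
      map4 M (R.d ∘ₗ a + a ∘ₗ R.d) b + map4 M a (R.d ∘ₗ b + b ∘ₗ R.d) := by
  have hM : M.d ∘ₗ LinearMap.id + LinearMap.id ∘ₗ M.d = 0 := ZModModule.add_self _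
  rw [map4, map4, map4]
  refine tensorD_comp_map_add.trans ?_
  congr 2
  refine tensorD_comp_map_add.trans ?_
  rw [hM, TensorProduct.map_zero_left, zero_add]
  congr 1
  refine tensorD_comp_map_add.trans ?_
  rw [hM, TensorProduct.map_zero_right, add_zero]

section Relations

variable (r r' : R.V) (m m' : M.V) (a : A.V)

theorem rel4_balanced₁₂ : R.actR r a ⊗ₜ[ZMod 2] (m ⊗ₜ[ZMod 2] (r' ⊗ₜ[ZMod 2] m')) +
    r ⊗ₜ[ZMod 2] (M.actL a m ⊗ₜ[ZMod 2] (r' ⊗ₜ[ZMod 2] m')) ∈ rel4 R M :=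
  Submodule.subset_span (.inl (.inl (.inl ⟨r, a, m, r', m', rfl⟩)))

theorem rel4_balanced₁₄ : R.actL a r ⊗ₜ[ZMod 2] (m ⊗ₜ[ZMod 2] (r' ⊗ₜ[ZMod 2] m')) +
    r ⊗ₜ[ZMod 2] (m ⊗ₜ[ZMod 2] (r' ⊗ₜ[ZMod 2] M.actR m' a)) ∈ rel4 R M :=
  Submodule.subset_span (.inl (.inl (.inr ⟨r, a, m, r', m', rfl⟩)))

theorem rel4_balanced₂₃ : r ⊗ₜ[ZMod 2] (M.actR m a ⊗ₜ[ZMod 2] (r' ⊗ₜ[ZMod 2] m')) +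
    r ⊗ₜ[ZMod 2] (m ⊗ₜ[ZMod 2] (R.actL a r' ⊗ₜ[ZMod 2] m')) ∈ rel4 R M :=
  Submodule.subset_span (.inl (.inr ⟨r, a, m, r', m', rfl⟩))

theorem rel4_balanced₃₄ : r ⊗ₜ[ZMod 2] (m ⊗ₜ[ZMod 2] (R.actR r' a ⊗ₜ[ZMod 2] m')) +
    r ⊗ₜ[ZMod 2] (m ⊗ₜ[ZMod 2] (r' ⊗ₜ[ZMod 2] M.actL a m')) ∈ rel4 R M :=
  Submodule.subset_span (.inr ⟨r, a, m, r', m', rfl⟩)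

theorem rel4_le {N : Submodule (ZMod 2) (T4 R M)}
    (h₁₂ : ∀ r a m r' m', R.actR r a ⊗ₜ (m ⊗ₜ (r' ⊗ₜ m')) +
      r ⊗ₜ (M.actL a m ⊗ₜ (r' ⊗ₜ m')) ∈ N)
    (h₁₄ : ∀ r a m r' m', R.actL a r ⊗ₜ (m ⊗ₜ (r' ⊗ₜ m')) +
      r ⊗ₜ (m ⊗ₜ (r' ⊗ₜ M.actR m' a)) ∈ N)
    (h₂₃ : ∀ r a m r' m', r ⊗ₜ (M.actR m a ⊗ₜ (r' ⊗ₜ m')) +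
      r ⊗ₜ (m ⊗ₜ (R.actL a r' ⊗ₜ m')) ∈ N)
    (h₃₄ : ∀ r a m r' m', r ⊗ₜ (m ⊗ₜ (R.actR r' a ⊗ₜ m')) +
      r ⊗ₜ (m ⊗ₜ (r' ⊗ₜ M.actL a m')) ∈ N) :
    rel4 R M ≤ N := by
  refine Submodule.span_le.2 ?_
  rintro _ (((⟨r, a, m, r', m', rfl⟩ | ⟨r, a, m, r', m', rfl⟩) | ⟨r, a, m, r', m', rfl⟩) |
    ⟨r, a, m, r', m', rfl⟩)
  exacts [h₁₂ r a m r' m', h₁₄ r a m r' m', h₂₃ r a m r' m', h₃₄ r a m r' m']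

end Relations

theorem rel4_le_comap_map4 {a b : R.V →ₗ[ZMod 2] S.V} (ha : a ∈ grHomSub R S s)
    (hb : b ∈ grHomSub R S t) : rel4 R M ≤ (rel4 S M).comap (map4 M a b) := by
  refine rel4_le ?_ ?_ ?_ ?_ <;> intro r x m r' m' <;>
    rw [Submodule.mem_comap, map_add, map4_tmul, map4_tmul]
  · rw [ha.2.2]
    exact rel4_balanced₁₂ _ _ _ _ _
  · rw [ha.2.1]
    exact rel4_balanced₁₄ _ _ _ _ _
  · rw [hb.2.1]
    exact rel4_balanced₂₃ _ _ _ _ _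
  · rw [hb.2.2]
    exact rel4_balanced₃₄ _ _ _ _ _

theorem rel4_le_comap_tau4 : rel4 R M ≤ (rel4 R M).comap (tau4 R M) := by
  refine rel4_le ?_ ?_ ?_ ?_ <;> intro r x m r' m' <;>
    rw [Submodule.mem_comap, map_add, tau4_tmul, tau4_tmul]
  · exact rel4_balanced₃₄ _ _ _ _ _
  · rw [add_comm]
    exact rel4_balanced₂₃ _ _ _ _ _
  · rw [add_comm]
    exact rel4_balanced₁₄ _ _ _ _ _
  · exact rel4_balanced₁₂ _ _ _ _ _

theorem d4_balanced₁₂_mem_rel4 (r r' : R.V) (m m' : M.V) (a : A.V) :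
    d4 R M (R.actR r a ⊗ₜ (m ⊗ₜ (r' ⊗ₜ m')) + r ⊗ₜ (M.actL a m ⊗ₜ (r' ⊗ₜ m'))) ∈ rel4 R M := by
  have h := add_mem
    (add_mem (rel4_balanced₁₂ (R.d r) r' m m' a) (rel4_balanced₁₂ r r' m m' (A.d a)))
    (add_mem (rel4_balanced₁₂ r r' (M.d m) m' a)
      (add_mem (rel4_balanced₁₂ r (R.d r') m m' a) (rel4_balanced₁₂ r r' m (M.d m') a)))
  convert h using 1
  simp only [map_add, d4_tmul, DGBimod.d_actR, DGBimod.d_actL, tmul_add, add_tmul]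
  abel

theorem d4_balanced₁₄_mem_rel4 (r r' : R.V) (m m' : M.V) (a : A.V) :
    d4 R M (R.actL a r ⊗ₜ (m ⊗ₜ (r' ⊗ₜ m')) + r ⊗ₜ (m ⊗ₜ (r' ⊗ₜ M.actR m' a))) ∈ rel4 R M := by
  have h := add_mem
    (add_mem (rel4_balanced₁₄ (R.d r) r' m m' a) (rel4_balanced₁₄ r r' m m' (A.d a)))
    (add_mem (rel4_balanced₁₄ r r' (M.d m) m' a)
      (add_mem (rel4_balanced₁₄ r (R.d r') m m' a) (rel4_balanced₁₄ r r' m (M.d m') a)))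
  convert h using 1
  simp only [map_add, d4_tmul, DGBimod.d_actR, DGBimod.d_actL, tmul_add, add_tmul]
  abel

theorem rel4_le_comap_d4 : rel4 R M ≤ (rel4 R M).comap (d4 R M) := by
  have htau {x} (hx : d4 R M x ∈ rel4 R M) : d4 R M (tau4 R M x) ∈ rel4 R M := by
    rw [← LinearMap.comp_apply, ← tau4_comp_d4]
    exact rel4_le_comap_tau4 hx
  refine rel4_le (fun _ _ _ _ _ => d4_balanced₁₂_mem_rel4 _ _ _ _ _)
    (fun _ _ _ _ _ => d4_balanced₁₄_mem_rel4 _ _ _ _ _) (fun r a m r' m' => ?_)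
    fun r a m r' m' => ?_
  · have := htau (d4_balanced₁₄_mem_rel4 r' r m' m a)
    rwa [map_add, tau4_tmul, tau4_tmul, add_comm] at this
  · have := htau (d4_balanced₁₂_mem_rel4 r' r m' m a)
    rwa [map_add, tau4_tmul, tau4_tmul] at this

theorem gr4_le_comap_map4 {a b : R.V →ₗ[ZMod 2] S.V} (ha : a ∈ grHomSub R S s)
    (hb : b ∈ grHomSub R S t) {n n' : ℤ} (hn : n + s + t = n') :
    gr4 R M n ≤ (gr4 S M n').comap (map4 M a b) := by
  refine Submodule.span_le.2 ?_
  rintro _ ⟨i₁, j₁, i₂, j₂, r, hr, m, hm, r', hr', m', hm', rfl, rfl⟩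
  exact Submodule.subset_span ⟨i₁ + s, j₁, i₂ + t, j₂, a r, ha.1 _ _ hr, m, hm, b r',
    hb.1 _ _ hr', m', hm', by rw [← hn]; ring, rfl⟩

theorem gr4_le_comap_tau4 (n : ℤ) : gr4 R M n ≤ (gr4 R M n).comap (tau4 R M) := by
  refine Submodule.span_le.2 ?_
  rintro _ ⟨i₁, j₁, i₂, j₂, r, hr, m, hm, r', hr', m', hm', rfl, rfl⟩
  exact Submodule.subset_span ⟨i₂, j₂, i₁, j₁, r', hr', m', hm', r, hr, m, hm, by ring, rfl⟩

theorem BoundedBimod.exists_gr_eq_bot (hM : BoundedBimod M) :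
    ∃ K : ℤ, ∀ i, K < |i| → M.gr i = ⊥ := by
  obtain ⟨u, hu⟩ := hM
  obtain ⟨K, hK⟩ := (u.image abs).bddAbove
  exact ⟨K, fun i hi => hu i fun hiu => (hK (Finset.mem_image_of_mem abs hiu)).not_gt hi⟩

theorem sandwich_tmul_mem_rel4_iff (g g' : R.V) (m m' : M.V) (a b a' b' : A.V) :
    R.actR (R.actL a g) b ⊗ₜ (m ⊗ₜ (R.actR (R.actL a' g') b' ⊗ₜ m')) ∈ rel4 R M ↔
      g ⊗ₜ (M.actR (M.actL b m) a' ⊗ₜ (g' ⊗ₜ M.actL b' (M.actR m' a))) ∈ rel4 R M := by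
  have hiff {x y : T4 R M} (h : x + y ∈ rel4 R M) : x ∈ rel4 R M ↔ y ∈ rel4 R M :=
    ⟨(Submodule.add_mem_iff_right _ · |>.1 h), (Submodule.add_mem_iff_left _ · |>.1 h)⟩
  rw [hiff (rel4_balanced₁₂ _ _ _ _ _), hiff (rel4_balanced₁₄ _ _ _ _ _), R.actLR,
    ← hiff (rel4_balanced₂₃ _ _ _ _ _), hiff (rel4_balanced₃₄ _ _ _ _ _)]

/- Sliding the coefficients of both copies of `C` into the copies of `M` leaves two generators, of
bounded degree; a large total degree therefore pushes a factor in `M` out of the support of `M`. -/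
theorem IsFiniteCellBimod.exists_gr4_le_rel4 {C : DGBimod A} (hC : IsFiniteCellBimod C)
    (hM : BoundedBimod M) : ∃ K : ℤ, ∀ q, K < |q| → gr4 C M q ≤ rel4 C M := by
  obtain ⟨ι, _, g, deg, hg, htop⟩ := hC.exists_finite_generators
  obtain ⟨K₁, hK₁⟩ := Finite.exists_le fun i => |deg i|
  obtain ⟨K₂, hK₂⟩ := hM.exists_gr_eq_bot
  refine ⟨2 * K₁ + 2 * K₂, fun q hq => Submodule.span_le.2 ?_⟩
  rintro _ ⟨i₁, j₁, i₂, j₂, r, hr, m, hm, r', hr', m', hm', hsum, rfl⟩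
  refine C.gr_le_of_sandwich_mem hg htop (S := (rel4 C M).comap
    ((TensorProduct.mk _ _ _).flip (m ⊗ₜ (r' ⊗ₜ m')))) (fun x p q hx a ha b hb => ?_) hr
  refine C.gr_le_of_sandwich_mem hg htop (S := (rel4 C M).comap
    (TensorProduct.mk _ _ _ (C.actR (C.actL a (g x)) b) ∘ₗ TensorProduct.mk _ _ _ m ∘ₗ
      (TensorProduct.mk _ _ _).flip m')) (fun y p' q' hy a' ha' b' hb' => ?_) hr'
  refine (sandwich_tmul_mem_rel4_iff (g x) (g y) m m' a b a' b').2 ?_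
  have hm₁ := M.actR_gr _ _ _ (M.actL_gr _ _ _ hb _ hm) _ ha'
  have hm₂ := M.actL_gr _ _ _ hb' _ (M.actR_gr _ _ _ hm' _ ha)
  rcases lt_or_ge K₂ |q + j₁ + p'| with h | h
  · rw [hK₂ _ h, Submodule.mem_bot] at hm₁
    simp [hm₁]
  rcases lt_or_ge K₂ |q' + (j₂ + p)| with h' | h'
  · rw [hK₂ _ h', Submodule.mem_bot] at hm₂
    simp [hm₂]
  have hx₁ := hK₁ x
  have hy₁ := hK₁ y
  grind

end CharTwo

/-! ### Periodic operators -/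

/-- The operator on finitely supported `ℤ`-indexed families which applies `f` to each entry and
moves the result `j` places to the right. -/
def shiftOp {V : Type*} [AddCommGroup V] [Module k V] (j : ℤ) (f : V →ₗ[k] V) :
    (ℤ →₀ V) →ₗ[k] (ℤ →₀ V) :=
  Finsupp.lmapDomain V k (· + j) ∘ₗ Finsupp.mapRange.linearMap f

section

variable {V : Type*} [AddCommGroup V] [Module k V] (i j : ℤ) (f g h₀ h₁ φ : V →ₗ[k] V)

theorem shiftOp_single (p : ℤ) (v : V) :
    shiftOp j f (Finsupp.single p v) = Finsupp.single (p + j) (f v) := by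
  simp [shiftOp]

theorem shiftOp_apply (x : ℤ →₀ V) (p : ℤ) : shiftOp j f x p = f (x (p - j)) := by
  conv_lhs => rw [← sub_add_cancel p j]
  exact Finsupp.mapDomain_apply (add_left_injective j) _ _

theorem shiftOp_comp : shiftOp i f ∘ₗ shiftOp j g = shiftOp (i + j) (f ∘ₗ g) := by
  ext x p
  simp only [LinearMap.comp_apply, shiftOp_apply, sub_sub]

theorem shiftOp_add : shiftOp j (f + g) = shiftOp j f + shiftOp j g := by
  ext x p
  simp only [LinearMap.comp_apply, LinearMap.add_apply, Finsupp.add_apply, shiftOp_apply]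

theorem shiftOp_zero : shiftOp j (0 : V →ₗ[k] V) = 0 := by
  ext x p
  simp only [LinearMap.comp_apply, LinearMap.zero_apply, shiftOp_apply, Finsupp.zero_apply]

theorem shiftOp_zero_left : shiftOp 0 f = Finsupp.mapRange.linearMap f := by
  ext x p
  simp only [LinearMap.comp_apply, shiftOp_apply, sub_zero, Finsupp.mapRange.linearMap_apply,
    Finsupp.mapRange_apply]

theorem shiftOp_zero_id : shiftOp 0 (LinearMap.id : V →ₗ[k] V) = LinearMap.id := by
  ext x p
  simp only [LinearMap.comp_apply, LinearMap.id_apply, shiftOp_apply, sub_zero]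

variable {f g h₀ h₁ φ}

theorem shiftOp_comp_self_eq_zero (hf : f ∘ₗ f = 0) (hfg : f ∘ₗ g + g ∘ₗ f = 0)
    (hg : g ∘ₗ g = 0) :
    (shiftOp (-1) f + shiftOp 0 g) ∘ₗ (shiftOp (-1) f + shiftOp 0 g) = 0 := by
  simp only [LinearMap.add_comp, LinearMap.comp_add, shiftOp_comp, hf, hg, shiftOp_zero,
    zero_add, add_zero, ← shiftOp_add]
  rw [add_comm, hfg, shiftOp_zero]

theorem shiftOp_homotopy (hφ : φ + (g ∘ₗ h₀ + h₀ ∘ₗ g) = LinearMap.id)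
    (h₀₁ : f ∘ₗ h₀ + h₀ ∘ₗ f + (g ∘ₗ h₁ + h₁ ∘ₗ g) = 0) (hh₁ : f ∘ₗ h₁ + h₁ ∘ₗ f = 0) :
    shiftOp 0 φ + (shiftOp (-1) f + shiftOp 0 g) ∘ₗ (shiftOp 0 h₀ + shiftOp (-1) h₁) +
      (shiftOp 0 h₀ + shiftOp (-1) h₁) ∘ₗ (shiftOp (-1) f + shiftOp 0 g) = LinearMap.id := by
  calc
    _ = shiftOp 0 (φ + (g ∘ₗ h₀ + h₀ ∘ₗ g)) +
          shiftOp (-1) (f ∘ₗ h₀ + h₀ ∘ₗ f + (g ∘ₗ h₁ + h₁ ∘ₗ g)) +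
          shiftOp (-1 + -1) (f ∘ₗ h₁ + h₁ ∘ₗ f) := by
      simp only [LinearMap.add_comp, LinearMap.comp_add, shiftOp_comp, shiftOp_add, add_zero,
        zero_add]
      abel
    _ = LinearMap.id := by
      rw [hφ, h₀₁, hh₁, shiftOp_zero, shiftOp_zero, add_zero, add_zero, shiftOp_zero_id]

end

/-! ### The strip deformation of the Hochschild–Tate bicomplex -/

section CharTwo

variable {A : DGA (ZMod 2)} {R M : DGBimod A}

theorem TateBicx_D :
    (TateBicx R M).D = shiftOp (-1) (LinearMap.id + tau4 R M) + shiftOp 0 (d4 R M) :=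
  congrArg₂ (· + ·) rfl (shiftOp_zero_left (d4 R M)).symm

theorem mem_TateBicx_N {x : ℤ →₀ T4 R M} : x ∈ (TateBicx R M).N ↔ ∀ p, x p ∈ rel4 R M :=
  Submodule.mem_iInf _

theorem shiftOp_mem_TateBicx_N (j : ℤ) {f : T4 R M →ₗ[ZMod 2] T4 R M}
    (hf : rel4 R M ≤ (rel4 R M).comap f) {x : ℤ →₀ T4 R M} (hx : x ∈ (TateBicx R M).N) :
    shiftOp j f x ∈ (TateBicx R M).N :=
  mem_TateBicx_N.2 fun p => by
    rw [shiftOp_apply]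
    exact hf (mem_TateBicx_N.1 hx _)

theorem shiftOp_mem_TateBicx_gr {f : T4 R M →ₗ[ZMod 2] T4 R M} {i j i' n n' : ℤ}
    (hf : gr4 R M n ≤ (gr4 R M n').comap f) (hi : i + j = i') {x : ℤ →₀ T4 R M}
    (hx : x ∈ (TateBicx R M).gr i n) : shiftOp j f x ∈ (TateBicx R M).gr i' n' := by
  obtain ⟨v, hv, rfl⟩ := hx
  exact ⟨f v, hf hv, by rw [← hi]; exact (shiftOp_single j f i v).symm⟩

theorem shiftOp_mem_TateBicx_N_of_mem_gr (j : ℤ) {f : T4 R M →ₗ[ZMod 2] T4 R M} {i n : ℤ}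
    (hf : gr4 R M n ≤ (rel4 R M).comap f) {x : ℤ →₀ T4 R M} (hx : x ∈ (TateBicx R M).gr i n) :
    shiftOp j f x ∈ (TateBicx R M).N := by
  obtain ⟨v, hv, rfl⟩ := hx
  refine mem_TateBicx_N.2 fun p => ?_
  rw [shiftOp_apply, Finsupp.lsingle_apply, Finsupp.single_apply]
  split_ifs
  exacts [hf hv, (map_zero f).symm ▸ zero_mem _]

theorem TateBicx_N_le_comap_D : (TateBicx R M).N ≤ (TateBicx R M).N.comap (TateBicx R M).D := by
  rw [TateBicx_D]
  have hrel : rel4 R M ≤ (rel4 R M).comap (LinearMap.id + tau4 R M) :=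
    fun v hv => add_mem (hv : v ∈ rel4 R M) (rel4_le_comap_tau4 hv)
  exact fun x hx => add_mem (shiftOp_mem_TateBicx_N (-1) hrel hx)
    (shiftOp_mem_TateBicx_N 0 rel4_le_comap_d4 hx)

theorem id_add_tau4_comp_self : (LinearMap.id + tau4 R M) ∘ₗ (LinearMap.id + tau4 R M) = 0 := by
  rw [LinearMap.add_comp, LinearMap.comp_add, LinearMap.comp_add, tau4_comp_self,
    LinearMap.id_comp, LinearMap.comp_id, LinearMap.id_comp, add_comm (tau4 R M)]
  exact ZModModule.add_self _

theorem id_add_tau4_comp_add (f : T4 R M →ₗ[ZMod 2] T4 R M) :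
    (LinearMap.id + tau4 R M) ∘ₗ f + f ∘ₗ (LinearMap.id + tau4 R M) =
      tau4 R M ∘ₗ f + f ∘ₗ tau4 R M := by
  rw [LinearMap.add_comp, LinearMap.comp_add, LinearMap.id_comp, LinearMap.comp_id,
    add_add_add_comm, ZModModule.add_self, zero_add]

theorem TateBicx_D_comp_D : (TateBicx R M).D ∘ₗ (TateBicx R M).D = 0 := by
  rw [TateBicx_D]
  refine shiftOp_comp_self_eq_zero id_add_tau4_comp_self ?_ d4_comp_self
  rw [id_add_tau4_comp_add, tau4_comp_d4]
  exact ZModModule.add_self _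

/-! ### Squaring a homotopy -/

variable {h e : R.V →ₗ[ZMod 2] R.V}

variable (M) in
/-- The homotopy `h ⊗ 1 + e ⊗ h` from `1` to `e ⊗ e` on `R ⊗ M ⊗ R ⊗ M` obtained from a homotopy
`h` from `1` to `e`. -/
def squareHtpy (h e : R.V →ₗ[ZMod 2] R.V) : T4 R M →ₗ[ZMod 2] T4 R M :=
  map4 M h LinearMap.id + map4 M e h

variable (M) in
/-- The second order homotopy `(h ⊗ h) τ`, which makes `squareHtpy M h e` commute with `τ` up to
homotopy. -/
def squareHtpyTau (h : R.V →ₗ[ZMod 2] R.V) : T4 R M →ₗ[ZMod 2] T4 R M :=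
  map4 M h h ∘ₗ tau4 R M

theorem map4_add_d4_squareHtpy (hh : R.d ∘ₗ h + h ∘ₗ R.d = LinearMap.id + e)
    (he : R.d ∘ₗ e + e ∘ₗ R.d = 0) :
    map4 M e e + (d4 R M ∘ₗ squareHtpy M h e + squareHtpy M h e ∘ₗ d4 R M) = LinearMap.id := by
  have hid : d4 R M ∘ₗ map4 M h LinearMap.id + map4 M h LinearMap.id ∘ₗ d4 R M =
      LinearMap.id + map4 M e LinearMap.id := by
    rw [d4_comp_map4_add, hh, LinearMap.comp_id, LinearMap.id_comp, ZModModule.add_self,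
      map4_zero_right, add_zero, map4_add_left, map4_id]
  have hcomp : d4 R M ∘ₗ map4 M e h + map4 M e h ∘ₗ d4 R M =
      map4 M e LinearMap.id + map4 M e e := by
    rw [d4_comp_map4_add, hh, he, map4_zero_left, zero_add, map4_add_right]
  rw [squareHtpy, LinearMap.comp_add, LinearMap.add_comp, add_add_add_comm, hid, hcomp]
  calc
    _ = LinearMap.id + (map4 M e LinearMap.id + map4 M e LinearMap.id) +
          (map4 M e e + map4 M e e) := by abel
    _ = LinearMap.id := by rw [ZModModule.add_self, ZModModule.add_self, add_zero, add_zero]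

theorem tau4_squareHtpy_add_d4_squareHtpyTau (hh : R.d ∘ₗ h + h ∘ₗ R.d = LinearMap.id + e) :
    tau4 R M ∘ₗ squareHtpy M h e + squareHtpy M h e ∘ₗ tau4 R M +
      (d4 R M ∘ₗ squareHtpyTau M h + squareHtpyTau M h ∘ₗ d4 R M) = 0 := by
  have hτ : tau4 R M ∘ₗ squareHtpy M h e =
      (map4 M LinearMap.id h + map4 M h e) ∘ₗ tau4 R M := by
    rw [squareHtpy, LinearMap.comp_add, tau4_comp_map4, tau4_comp_map4, LinearMap.add_comp]
  have hd : d4 R M ∘ₗ squareHtpyTau M h + squareHtpyTau M h ∘ₗ d4 R M =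
      (map4 M LinearMap.id h + map4 M h e + squareHtpy M h e) ∘ₗ tau4 R M := by
    rw [squareHtpyTau, LinearMap.comp_assoc _ (tau4 R M), tau4_comp_d4, ← LinearMap.comp_assoc,
      ← LinearMap.comp_assoc, ← LinearMap.add_comp, d4_comp_map4_add, hh, map4_add_left,
      map4_add_right, squareHtpy]
    abel_nf
  rw [hd, hτ, ← LinearMap.add_comp]
  exact ZModModule.add_self _

theorem tau4_comp_squareHtpyTau_add :
    tau4 R M ∘ₗ squareHtpyTau M h + squareHtpyTau M h ∘ₗ tau4 R M = 0 := by
  rw [squareHtpyTau, ← LinearMap.comp_assoc, tau4_comp_map4]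
  exact ZModModule.add_self _

theorem rel4_le_comap_squareHtpy (hh : h ∈ grHomSub R R 1) (he : e ∈ grHomSub R R 0) :
    rel4 R M ≤ (rel4 R M).comap (squareHtpy M h e) := by
  intro x hx
  rw [Submodule.mem_comap, squareHtpy, LinearMap.add_apply]
  exact add_mem (rel4_le_comap_map4 hh (id_mem_grHomSub R) hx) (rel4_le_comap_map4 he hh hx)

theorem rel4_le_comap_squareHtpyTau (hh : h ∈ grHomSub R R 1) :
    rel4 R M ≤ (rel4 R M).comap (squareHtpyTau M h) :=
  fun _ hx => rel4_le_comap_map4 hh hh (rel4_le_comap_tau4 hx)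

theorem gr4_le_comap_squareHtpy (hh : h ∈ grHomSub R R 1) (he : e ∈ grHomSub R R 0) (n : ℤ) :
    gr4 R M n ≤ (gr4 R M (n + 1)).comap (squareHtpy M h e) := by
  intro x hx
  rw [Submodule.mem_comap, squareHtpy, LinearMap.add_apply]
  exact add_mem (gr4_le_comap_map4 hh (id_mem_grHomSub R) (by ring) hx)
    (gr4_le_comap_map4 he hh (by ring) hx)

theorem gr4_le_comap_squareHtpyTau (hh : h ∈ grHomSub R R 1) (n : ℤ) :
    gr4 R M n ≤ (gr4 R M (n + 2)).comap (squareHtpyTau M h) :=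
  fun _ hx => gr4_le_comap_map4 hh hh (by ring) (gr4_le_comap_tau4 n hx)

variable {C : DGBimod A} {α : R.V →ₗ[ZMod 2] C.V} {β : C.V →ₗ[ZMod 2] R.V}

/-- The deformation of the Hochschild–Tate bicomplex into a horizontal strip obtained by squaring
a homotopy `h` from `1` to an endomorphism `β α` of `R` that factors through `C`. -/
def tateStripDeformation (hα : α ∈ bcmSub R C 0) (hβ : β ∈ bcmSub C R 0)
    (hgr : h ∈ grHomSub R R 1) (hh : R.d ∘ₗ h + h ∘ₗ R.d = LinearMap.id + β ∘ₗ α) {K : ℤ}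
    (hK : ∀ q, K < |q| → gr4 C M q ≤ rel4 C M) : (TateBicx R M).StripDeformation :=
  have hα₀ := (mem_bcmSub_iff.1 hα).1
  have hβ₀ := (mem_bcmSub_iff.1 hβ).1
  have he := comp_mem_bcmSub hβ hα (add_zero 0)
  have he₀ := (mem_bcmSub_iff.1 he).1
  have hde : R.d ∘ₗ (β ∘ₗ α) + (β ∘ₗ α) ∘ₗ R.d = 0 := by
    rw [(mem_bcmSub_iff.1 he).2]
    exact ZModModule.add_self _
  { φ := shiftOp 0 (map4 M (β ∘ₗ α) (β ∘ₗ α))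
    H := shiftOp 0 (squareHtpy M h (β ∘ₗ α)) + shiftOp (-1) (squareHtpyTau M h)
    K := K
    homotopy := by
      rw [TateBicx_D]
      refine shiftOp_homotopy (map4_add_d4_squareHtpy hh hde) ?_ ?_
      · rw [id_add_tau4_comp_add, tau4_squareHtpy_add_d4_squareHtpyTau hh]
      · rw [id_add_tau4_comp_add, tau4_comp_squareHtpyTau_add]
    φ_N := fun _ hx => shiftOp_mem_TateBicx_N 0 (rel4_le_comap_map4 he₀ he₀) hx
    H_N := fun _ hx => add_mem
      (shiftOp_mem_TateBicx_N 0 (rel4_le_comap_squareHtpy hgr he₀) hx)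
      (shiftOp_mem_TateBicx_N (-1) (rel4_le_comap_squareHtpyTau hgr) hx)
    φ_gr := fun i j _ hx =>
      shiftOp_mem_TateBicx_gr (gr4_le_comap_map4 he₀ he₀ (by ring)) (add_zero i) hx
    H_gr := fun i j _ hx => Submodule.add_mem_sup
      (shiftOp_mem_TateBicx_gr (gr4_le_comap_squareHtpy hgr he₀ j) (add_zero i) hx)
      (shiftOp_mem_TateBicx_gr (gr4_le_comap_squareHtpyTau hgr j) rfl hx)
    φ_strip := by
      refine fun i j hj _ hx => shiftOp_mem_TateBicx_N_of_mem_gr 0 (fun v hv => ?_) hx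
      have hαv : map4 M α α v ∈ rel4 C M := hK j hj (gr4_le_comap_map4 hα₀ hα₀ (by ring) hv)
      rw [Submodule.mem_comap, map4_comp]
      exact rel4_le_comap_map4 hβ₀ hβ₀ hαv }

/-! ### Convergence -/

theorem tate_spectral_sequences_converge_general {X : DGBimod A} {ρ : R.V →ₗ[ZMod 2] X.V}
    (hres : IsResolution R X ρ) (hX : IsPerfect X) (hM : BoundedBimod M) :
    (TateBicx R M).convergesTo (TateBicx R M).Fcol ∧
      (TateBicx R M).convergesTo (TateBicx R M).Frow := by
  obtain ⟨C, hC, α, hα, β, hβ, hαβ⟩ := hres.exists_finite_cell_domination hX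
  obtain ⟨h, hgr, hh⟩ := mem_nullHtpSub_iff.1 hαβ
  obtain ⟨K, hK⟩ := hC.exists_gr4_le_rel4 hM
  let Δ := tateStripDeformation hα hβ hgr hh hK
  exact ⟨Δ.convergesTo_Fcol TateBicx_D_comp_D TateBicx_N_le_comap_D,
    Δ.convergesTo_Frow TateBicx_D_comp_D TateBicx_N_le_comap_D⟩

end CharTwo

/-- **Proposition 3.7.** If `A` is homologically smooth and `M` is a bounded dg
`(A,A)`-bimodule, then both spectral sequences `ʰᵛE` and `ᵛʰE` attached to the
Hochschild–Tate bicomplex `HC^{Tate}(A, M ⊗̃_A M)` converge to the homology of its total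
complex. -/
theorem tate_spectral_sequences_converge
    (A : DGA (ZMod 2)) (R : DGBimod A) (ρ : R.V →ₗ[ZMod 2] A.diag.V)
    (hres : IsResolution R A.diag ρ)
    (hsmooth : HomSmooth A)
    (M : DGBimod A) (hbdd : BoundedBimod M) :
    (TateBicx R M).convergesTo (TateBicx R M).Fcol ∧
    (TateBicx R M).convergesTo (TateBicx R M).Frow :=
  tate_spectral_sequences_converge_general hres hsmooth hbdd

end LT
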